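/- arXiv:1304.5288 — 2 statements merged into one kernel-verified Lean document; each statement's English description precedes it below -/
import Mathlib

section
/- Let C be a nodal curve with components C_1,…,C_p and marked smooth point σ(0). Fix (i,j,k) with i ≠ j and C_i ∩ C_j ≠ ∅. Then at most one tail in T²_{i,k} ∪ T²_{j,k} ∪ T³_{i,k} ∪ T³_{j,k} has a terminal point lying in C_i ∩ C_j; i.e., d_{T_{i,k} ∪ T_{j,k}, C_i ∩ C_j} ≤ 1, where for a set S of subcurves and a set N of nodes, d_{S,N} counts the tails W ∈ S with Term_W ∩ N ≠ ∅. -/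
open Finset

/-- A combinatorial model of a nodal curve: `V` is the set of irreducible
components, `N` the set of nodes, `ends e` the (one or two) components through
the node `e`, `gen v` the geometric genus of the component `v`, and `base` the
component containing the marked smooth point `σ(0)`. -/
structure NodalGraph where
  V : Type
  N : Type
  [fV : Fintype V]
  [dV : DecidableEq V]
  [fN : Fintype N]
  [dN : DecidableEq N]
  ends : N → V × V
  gen : V → ℕ
  base : V

attribute [instance] NodalGraph.fV NodalGraph.dV NodalGraph.fN NodalGraph.dN

namespace NodalGraph

variable (G : NodalGraph)

/-- Two components are adjacent if some node lies on both. -/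
def Adj (a b : G.V) : Prop := ∃ e, G.ends e = (a, b) ∨ G.ends e = (b, a)

/-- The set of terminal points of a subcurve `Z`, i.e. the nodes in `Z ∩ Zᶜ`. -/
def Term (Z : Finset G.V) : Finset G.N :=
  univ.filter (fun e =>
    ((G.ends e).1 ∈ Z ∧ (G.ends e).2 ∉ Z) ∨ ((G.ends e).1 ∉ Z ∧ (G.ends e).2 ∈ Z))

/-- `k_Z`, the number of terminal points of `Z`. -/
def k (Z : Finset G.V) : ℕ := (G.Term Z).card

/-- A (nonempty) subcurve is connected. -/
def ConnSub (Z : Finset G.V) : Prop :=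
  Z.Nonempty ∧ ∀ u ∈ Z, ∀ v ∈ Z,
    Relation.ReflTransGen (fun a b => a ∈ Z ∧ b ∈ Z ∧ G.Adj a b) u v

/-- The whole curve is connected. -/
def Connected : Prop := G.ConnSub univ

/-- A tail: a proper subcurve `Z` with both `Z` and `Zᶜ` connected. -/
def IsTail (Z : Finset G.V) : Prop := Z ≠ univ ∧ G.ConnSub Z ∧ G.ConnSub Zᶜ

/-- A `m`-tail: a tail with `k_Z = m`. -/
def IsKTail (Z : Finset G.V) (m : ℕ) : Prop := G.IsTail Z ∧ G.k Z = m

/-- The node `e` lies on the component `v`. -/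
def onComp (e : G.N) (v : G.V) : Prop := (G.ends e).1 = v ∨ (G.ends e).2 = v

/-- The node `e`, as a point of the curve, lies on the subcurve `Z`. -/
def nodeOn (e : G.N) (Z : Finset G.V) : Prop := (G.ends e).1 ∈ Z ∨ (G.ends e).2 ∈ Z

/-- The subcurve `Z` crosses the node `e`: both branches of `e` lie in `Z`. -/
def crosses (Z : Finset G.V) (e : G.N) : Prop := (G.ends e).1 ∈ Z ∧ (G.ends e).2 ∈ Z

/-- `Z ≺ Z'`: strict inclusion with disjoint terminal points. -/
def prec (Z Z' : Finset G.V) : Prop := Z ⊂ Z' ∧ G.Term Z ∩ G.Term Z' = ∅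

/-- The pair `(Z, Z')` is free: disjoint terminal points. -/
def free (Z Z' : Finset G.V) : Prop := G.Term Z ∩ G.Term Z' = ∅

/-- The pair `(Z, Z')` is perfect. -/
def perfect (Z Z' : Finset G.V) : Prop := Z ⊆ Z' ∨ Z' ⊆ Z ∨ Zᶜ ⊆ Z' ∨ Z' ⊆ Zᶜ

/-- `T¹_γ`: the nested set of 1-tails containing `C_γ` and avoiding `σ(0)`. -/
def T1 (γ : G.V) : Set (Finset G.V) := { Z | G.IsKTail Z 1 ∧ γ ∈ Z ∧ G.base ∉ Z }

/-- The defining condition for the 2-tails entering `T²_{γ,γ'}`. -/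
def cond2 (γ γ' : G.V) (Z : Finset G.V) : Prop :=
  G.IsKTail Z 2 ∧ γ ∈ Z ∧ γ' ∈ Z ∧ G.base ∉ Z

/-- `W 0 ≺ W 1 ≺ ⋯ ≺ W (M-1)` is the nested set `T²_{γ,γ'}` of 2-tails:
each `W t` is minimal among the 2-tails `Z ⊇ C_γ ∪ C_γ'` with `σ(0) ∈ Zᶜ`
and `W (t-1) ≺ Z` (starting from `W_{-1} = ∅`), and the chain is maximal. -/
def IsNested2 (γ γ' : G.V) (M : ℕ) (W : ℕ → Finset G.V) : Prop :=
  (∀ t < M, Minimal (fun Z => G.cond2 γ γ' Z ∧ G.prec (if t = 0 then ∅ else W (t - 1)) Z) (W t)) ∧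
  ¬ ∃ Z, G.cond2 γ γ' Z ∧ G.prec (if M = 0 then ∅ else W (M - 1)) Z

/-- The set underlying a finite chain `W 0, …, W (M-1)`. -/
def chainSet (M : ℕ) (W : ℕ → Finset G.V) : Set (Finset G.V) := { Z | ∃ t < M, W t = Z }

/-- The defining condition for the 3-tails entering `T³_{γ,γ'}`:
3-tails that are moreover free with respect to every member of `T²_{γ,γ'}`. -/
def cond3 (γ γ' : G.V) (T2 : Set (Finset G.V)) (Z : Finset G.V) : Prop :=
  G.IsKTail Z 3 ∧ γ ∈ Z ∧ γ' ∈ Z ∧ G.base ∉ Z ∧ ∀ W ∈ T2, G.free Z W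

/-- `W 0 ≺ ⋯ ≺ W (M-1)` is the nested set `T³_{γ,γ'}` of 3-tails (relative to
the set `T2` of nested 2-tails). -/
def IsNested3 (γ γ' : G.V) (T2 : Set (Finset G.V)) (M : ℕ) (W : ℕ → Finset G.V) : Prop :=
  (∀ t < M, Minimal (fun Z => G.cond3 γ γ' T2 Z ∧ G.prec (if t = 0 then ∅ else W (t - 1)) Z) (W t)) ∧
  ¬ ∃ Z, G.cond3 γ γ' T2 Z ∧ G.prec (if M = 0 then ∅ else W (M - 1)) Z

end NodalGraph

namespace NodalGraph

variable {G : NodalGraph}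

/-- Nodes joining the two subcurves `A` and `B`. -/
def E (G : NodalGraph) (A B : Finset G.V) : Finset G.N :=
  univ.filter (fun e =>
    ((G.ends e).1 ∈ A ∧ (G.ends e).2 ∈ B) ∨ ((G.ends e).1 ∈ B ∧ (G.ends e).2 ∈ A))

lemma E_comm (A B : Finset G.V) : G.E A B = G.E B A := by
  ext e; simp only [E, mem_filter, mem_univ, true_and]; tauto

lemma adj_symm {a b : G.V} (h : G.Adj a b) : G.Adj b a := by
  obtain ⟨e, h⟩ := h; exact ⟨e, h.symm⟩

lemma E_pos_of_adj {A B : Finset G.V} {a b : G.V} (ha : a ∈ A) (hb : b ∈ B) (h : G.Adj a b) :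
    1 ≤ (G.E A B).card := by
  obtain ⟨e, h⟩ := h
  refine Finset.card_pos.mpr ⟨e, ?_⟩
  simp only [E, mem_filter, mem_univ, true_and]
  rcases h with h | h <;> simp [h, ha, hb]

lemma conn_cut {Z X : Finset G.V} (hZ : G.ConnSub Z) {u v : G.V} (hu : u ∈ X) (huZ : u ∈ Z)
    (hv : v ∈ Z) (hvX : v ∉ X) : ∃ a ∈ Z, ∃ b ∈ Z, a ∈ X ∧ b ∉ X ∧ G.Adj a b := by
  by_contra hcon
  apply hvX
  have h := hZ.2 u huZ v hv
  clear hvX hv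
  induction h with
  | refl => exact hu
  | tail _ hbc ih =>
    by_contra hc
    exact hcon ⟨_, hbc.1, _, hbc.2.1, ih, hc, hbc.2.2⟩

lemma conn_of_cut {Z : Finset G.V} (hne : Z.Nonempty)
    (h : ∀ X : Finset G.V, X ⊆ Z → X.Nonempty → (∃ v ∈ Z, v ∉ X) →
      ∃ a ∈ X, ∃ b ∈ Z, b ∉ X ∧ G.Adj a b) : G.ConnSub Z := by
  classical
  refine ⟨hne, fun u hu v hv => ?_⟩
  by_contra hcon
  let X := Z.filter (fun w =>
    Relation.ReflTransGen (fun a b => a ∈ Z ∧ b ∈ Z ∧ G.Adj a b) u w)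
  obtain ⟨a, ha, b, hb, hbX, hab⟩ := h X (filter_subset _ _)
    ⟨u, by simp only [X, mem_filter]; exact ⟨hu, Relation.ReflTransGen.refl⟩⟩
    ⟨v, hv, by simp only [X, mem_filter]; tauto⟩
  simp only [X, mem_filter] at ha hbX
  exact hbX ⟨hb, ha.2.tail ⟨ha.1, hb, hab⟩⟩

lemma conn_union {A B : Finset G.V} (hA : G.ConnSub A) (hB : G.ConnSub B) {a b : G.V}
    (ha : a ∈ A) (hb : b ∈ B) (hab : a = b ∨ G.Adj a b) : G.ConnSub (A ∪ B) := by
  have key : ∀ w ∈ A ∪ B,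
      Relation.ReflTransGen (fun x y => x ∈ A ∪ B ∧ y ∈ A ∪ B ∧ G.Adj x y) a w ∧
      Relation.ReflTransGen (fun x y => x ∈ A ∪ B ∧ y ∈ A ∪ B ∧ G.Adj x y) w a := by
    intro w hw
    have hab1 : Relation.ReflTransGen (fun x y => x ∈ A ∪ B ∧ y ∈ A ∪ B ∧ G.Adj x y) a b ∧
        Relation.ReflTransGen (fun x y => x ∈ A ∪ B ∧ y ∈ A ∪ B ∧ G.Adj x y) b a := by
      rcases hab with rfl | hab
      · exact ⟨.refl, .refl⟩
      · exact ⟨.single ⟨mem_union_left _ ha, mem_union_right _ hb, hab⟩,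
          .single ⟨mem_union_right _ hb, mem_union_left _ ha, adj_symm hab⟩⟩
    have mA : ∀ x y, (x ∈ A ∧ y ∈ A ∧ G.Adj x y) → (x ∈ A ∪ B ∧ y ∈ A ∪ B ∧ G.Adj x y) :=
      fun x y h => ⟨mem_union_left _ h.1, mem_union_left _ h.2.1, h.2.2⟩
    have mB : ∀ x y, (x ∈ B ∧ y ∈ B ∧ G.Adj x y) → (x ∈ A ∪ B ∧ y ∈ A ∪ B ∧ G.Adj x y) :=
      fun x y h => ⟨mem_union_right _ h.1, mem_union_right _ h.2.1, h.2.2⟩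
    rcases mem_union.mp hw with hw | hw
    · exact ⟨Relation.ReflTransGen.mono mA _ _ (hA.2 a ha w hw), Relation.ReflTransGen.mono mA _ _ (hA.2 w hw a ha)⟩
    · exact ⟨hab1.1.trans (Relation.ReflTransGen.mono mB _ _ (hB.2 b hb w hw)), (Relation.ReflTransGen.mono mB _ _ (hB.2 w hw b hb)).trans hab1.2⟩
  exact ⟨⟨a, mem_union_left _ ha⟩, fun u hu v hv => (key u hu).2.trans (key v hv).1⟩

/-- Two parts of a connected subcurve are joined by a node. -/
lemma E_pos_of_conn {Z A B : Finset G.V} (hZ : G.ConnSub Z) (hAB : Z = A ∪ B)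
    (hA : A.Nonempty) (hB : B.Nonempty) (hd : Disjoint A B) : 1 ≤ (G.E A B).card := by
  obtain ⟨u, hu⟩ := hA
  obtain ⟨v, hv⟩ := hB
  subst hAB
  obtain ⟨a, _, b, hb, haA, hbA, hab⟩ := conn_cut hZ hu (mem_union_left _ hu)
    (mem_union_right _ hv) (Finset.disjoint_right.mp hd hv)
  exact E_pos_of_adj haA ((mem_union.mp hb).resolve_left hbA) hab

/-- Cutting a bridge leaves a connected part. -/
lemma conn_bridge {Z A B : Finset G.V} (hZ : G.ConnSub Z) (hAB : Z = A ∪ B)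
    (hA : A.Nonempty) (hd : Disjoint A B) (h1 : (G.E A B).card ≤ 1) : G.ConnSub A := by
  subst hAB
  refine conn_of_cut hA (fun X hXA hX hv => ?_)
  obtain ⟨v, hvA, hvX⟩ := hv
  obtain ⟨u, hu⟩ := hX
  by_contra hcon
  push Not at hcon
  obtain ⟨a, _, b, hb, haX, hbX, e, he⟩ := conn_cut hZ hu (mem_union_left _ (hXA hu))
    (mem_union_left _ hvA) hvX
  have hbA : b ∉ A := fun hbA => hcon a haX b hbA hbX ⟨e, he⟩
  have hbB : b ∈ B := (mem_union.mp hb).resolve_left hbA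
  obtain ⟨c, hc, d, hd', hcX, hdX, f, hf⟩ := conn_cut (X := A \ X) hZ (u := v) (v := u)
    (mem_sdiff.mpr ⟨hvA, hvX⟩) (mem_union_left _ hvA) (mem_union_left _ (hXA hu))
    (by simp [hu])
  rw [mem_sdiff] at hcX
  have hdA : d ∉ A := by
    intro hdA
    have hdX' : d ∈ X := by
      by_contra h
      exact hdX (mem_sdiff.mpr ⟨hdA, h⟩)
    exact hcon d hdX' c hcX.1 hcX.2 (adj_symm ⟨f, hf⟩)
  have hdB : d ∈ B := (mem_union.mp hd').resolve_left hdA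
  have heE : e ∈ G.E A B := by
    simp only [E, mem_filter, mem_univ, true_and]
    rcases he with h | h <;> simp [h, hXA haX, hbB]
  have hfE : f ∈ G.E A B := by
    simp only [E, mem_filter, mem_univ, true_and]
    rcases hf with h | h <;> simp [h, hcX.1, hdB]
  have hef := Finset.card_le_one.mp h1 e heE f hfE
  subst hef
  have haA := hXA haX
  have hcA := hcX.1
  have hac : a = c := by
    rcases he with h | h <;> rcases hf with h' | h' <;> rw [h] at h' <;>
      simp only [Prod.mk.injEq] at h'
    · exact h'.1
    · exact absurd (h'.1 ▸ haA) hdA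
    · exact absurd (h'.2 ▸ haA) hdA
    · exact h'.2
  exact hcX.2 (hac ▸ haX)

lemma k_quad (X Y : Finset G.V) : G.k X =
    (G.E (X ∩ Y) (Y \ X)).card + (G.E (X ∩ Y) (X ∪ Y)ᶜ).card +
    (G.E (X \ Y) (Y \ X)).card + (G.E (X \ Y) (X ∪ Y)ᶜ).card := by
  simp only [k, Term, E, Finset.card_filter, ← Finset.sum_add_distrib]
  refine Finset.sum_congr rfl (fun e _ => ?_)
  by_cases h1 : (G.ends e).1 ∈ X <;> by_cases h2 : (G.ends e).1 ∈ Y <;>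
  by_cases h3 : (G.ends e).2 ∈ X <;> by_cases h4 : (G.ends e).2 ∈ Y <;>
  simp [h1, h2, h3, h4]

lemma k_union (X Y : Finset G.V) : G.k (X ∪ Y) =
    (G.E (X ∩ Y) (X ∪ Y)ᶜ).card + (G.E (X \ Y) (X ∪ Y)ᶜ).card +
      (G.E (Y \ X) (X ∪ Y)ᶜ).card := by
  simp only [k, Term, E, Finset.card_filter, ← Finset.sum_add_distrib]
  refine Finset.sum_congr rfl (fun e _ => ?_)
  by_cases h1 : (G.ends e).1 ∈ X <;> by_cases h2 : (G.ends e).1 ∈ Y <;>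
  by_cases h3 : (G.ends e).2 ∈ X <;> by_cases h4 : (G.ends e).2 ∈ Y <;>
  simp [h1, h2, h3, h4]

lemma k_inter (X Y : Finset G.V) : G.k (X ∩ Y) =
    (G.E (X ∩ Y) (X ∪ Y)ᶜ).card + (G.E (X ∩ Y) (X \ Y)).card +
      (G.E (X ∩ Y) (Y \ X)).card := by
  simp only [k, Term, E, Finset.card_filter, ← Finset.sum_add_distrib]
  refine Finset.sum_congr rfl (fun e _ => ?_)
  by_cases h1 : (G.ends e).1 ∈ X <;> by_cases h2 : (G.ends e).1 ∈ Y <;>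
  by_cases h3 : (G.ends e).2 ∈ X <;> by_cases h4 : (G.ends e).2 ∈ Y <;>
  simp [h1, h2, h3, h4]

lemma Term_inter_subset (X Y : Finset G.V) : G.Term (X ∩ Y) ⊆ G.Term X ∪ G.Term Y := by
  intro e
  simp only [Term, mem_filter, mem_univ, true_and, mem_union, mem_inter]
  tauto

lemma Term_union_subset (X Y : Finset G.V) : G.Term (X ∪ Y) ⊆ G.Term X ∪ G.Term Y := by
  intro e
  simp only [Term, mem_filter, mem_univ, true_and, mem_union]
  tauto

/-- The counting data of two crossing tails. -/
lemma quad_facts {X Y : Finset G.V} (hX : G.IsTail X) (hY : G.IsTail Y) {p q r s : G.V}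
    (hp : p ∈ X ∧ p ∈ Y) (hq : q ∈ X ∧ q ∉ Y) (hr : r ∉ X ∧ r ∈ Y) (hs : s ∉ X ∧ s ∉ Y) :
    1 ≤ (G.E (X ∩ Y) (X \ Y)).card ∧ 1 ≤ (G.E (X ∩ Y) (Y \ X)).card ∧
    1 ≤ (G.E (X \ Y) (X ∪ Y)ᶜ).card ∧ 1 ≤ (G.E (Y \ X) (X ∪ Y)ᶜ).card ∧
    G.k Y = (G.E (X ∩ Y) (X \ Y)).card + (G.E (X ∩ Y) (X ∪ Y)ᶜ).card +
    (G.E (X \ Y) (Y \ X)).card + (G.E (Y \ X) (X ∪ Y)ᶜ).card := by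
  have hP : (X ∩ Y).Nonempty := ⟨p, by simp [hp]⟩
  have hQ : (X \ Y).Nonempty := ⟨q, by simp [hq]⟩
  have hR : (Y \ X).Nonempty := ⟨r, by simp [hr]⟩
  have hS : ((X ∪ Y)ᶜ).Nonempty := ⟨s, by simp [hs]⟩
  refine ⟨E_pos_of_conn hX.2.1 ?_ hP hQ ?_, E_pos_of_conn hY.2.1 ?_ hP hR ?_,
    E_pos_of_conn hY.2.2 ?_ hQ hS ?_, E_pos_of_conn hX.2.2 ?_ hR hS ?_, ?_⟩
  · ext x; simp only [mem_union, mem_inter, mem_sdiff]; tauto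
  · rw [Finset.disjoint_left]; intro x; simp only [mem_inter, mem_sdiff]; tauto
  · ext x; simp only [mem_union, mem_inter, mem_sdiff]; tauto
  · rw [Finset.disjoint_left]; intro x; simp only [mem_inter, mem_sdiff]; tauto
  · ext x; simp only [mem_union, mem_compl, mem_sdiff]; tauto
  · rw [Finset.disjoint_left]; intro x; simp only [mem_compl, mem_union, mem_sdiff]; tauto
  · ext x; simp only [mem_union, mem_compl, mem_sdiff]; tauto
  · rw [Finset.disjoint_left]; intro x; simp only [mem_compl, mem_union, mem_sdiff]; tauto
  · have := k_quad Y X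
    rw [inter_comm Y X, union_comm Y X, E_comm (Y \ X) (X \ Y)] at this
    exact this

/-- Crossing 2-tails meet in a 2-tail. -/
lemma inter_two_tail {X Y : Finset G.V} (hX : G.IsKTail X 2) (hY : G.IsKTail Y 2) {p q r s : G.V}
    (hp : p ∈ X ∧ p ∈ Y) (hq : q ∈ X ∧ q ∉ Y) (hr : r ∉ X ∧ r ∈ Y) (hs : s ∉ X ∧ s ∉ Y) :
    G.IsKTail (X ∩ Y) 2 := by
  obtain ⟨h1, h2, h3, h4, h5⟩ := quad_facts hX.1 hY.1 hp hq hr hs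
  have h6 := k_quad X Y
  have h7 := hX.2
  have h8 := hY.2
  have h9 := k_inter X Y
  refine ⟨⟨?_, ?_, ?_⟩, by omega⟩
  · intro h
    have : s ∈ X ∩ Y := h ▸ mem_univ s
    exact hs.1 (mem_inter.mp this).1
  · refine conn_bridge (B := X \ Y) hX.1.2.1 ?_ ⟨p, by simp [hp]⟩ ?_ (by omega)
    · ext x; simp only [mem_union, mem_inter, mem_sdiff]; tauto
    · rw [Finset.disjoint_left]; intro x; simp only [mem_inter, mem_sdiff]; tauto
  · rw [Finset.compl_inter]
    exact conn_union hX.1.2.2 hY.1.2.2 (mem_compl.mpr hs.1) (mem_compl.mpr hs.2) (Or.inl rfl)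

/-- Minimal elements in the definition of `T²` are minimum. -/
lemma min_le {γ γ' : G.V} {p Z U : Finset G.V}
    (hZ : Minimal (fun Z => G.cond2 γ γ' Z ∧ G.prec p Z) Z)
    (hU : G.cond2 γ γ' U ∧ G.prec p U) : Z ⊆ U := by
  by_contra hZU
  by_cases hUZ : U ⊆ Z
  · exact hZU (hZ.2 hU hUZ)
  obtain ⟨q, hq⟩ := Finset.not_subset.mp hZU
  obtain ⟨r, hr⟩ := Finset.not_subset.mp hUZ
  obtain ⟨⟨z1, z2, z3, z4⟩, z5, z6⟩ := hZ.1
  obtain ⟨⟨u1, u2, u3, u4⟩, u5, u6⟩ := hU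
  have ht : G.IsKTail (Z ∩ U) 2 := inter_two_tail z1 u1 ⟨z2, u2⟩ hq ⟨hr.2, hr.1⟩ ⟨z4, u4⟩
  have hdis : G.Term p ∩ G.Term (Z ∩ U) = ∅ := by
    rw [Finset.eq_empty_iff_forall_notMem]
    intro e he
    rw [mem_inter] at he
    rcases mem_union.mp (Term_inter_subset Z U he.2) with h | h
    · exact (Finset.eq_empty_iff_forall_notMem.mp z6 e) (mem_inter.mpr ⟨he.1, h⟩)
    · exact (Finset.eq_empty_iff_forall_notMem.mp u6 e) (mem_inter.mpr ⟨he.1, h⟩)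
  have hle := hZ.2 (y := Z ∩ U) ⟨⟨ht, mem_inter.mpr ⟨z2, u2⟩, mem_inter.mpr ⟨z3, u3⟩,
    fun h => z4 (mem_inter.mp h).1⟩, ⟨?_, hdis⟩⟩ inter_subset_left
  · exact hZU (fun x hx => (mem_inter.mp (hle hx)).2)
  · refine Finset.ssubset_iff_subset_ne.mpr ⟨subset_inter z5.1 u5.1, ?_⟩
    rintro rfl
    have h2 := ht.2
    rw [inter_self] at hdis
    rw [k, hdis] at h2
    simp at h2

lemma mem_Term_of {e : G.N} {i j : G.V} (hij : i ≠ j) (ei : G.onComp e i) (ej : G.onComp e j)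
    {X : Finset G.V} (hi : i ∈ X) (hj : j ∉ X) : e ∈ G.Term X := by
  simp only [Term, mem_filter, mem_univ, true_and]
  rcases ei with ei | ei <;> rcases ej with ej | ej
  · exact absurd (ei.symm.trans ej) hij
  · left; rw [ei, ej]; exact ⟨hi, hj⟩
  · right; rw [ei, ej]; exact ⟨hj, hi⟩
  · exact absurd (ei.symm.trans ej) hij

lemma not_mem_of_Term {e : G.N} {i j : G.V} (hij : i ≠ j) (ei : G.onComp e i) (ej : G.onComp e j)
    {X : Finset G.V} (hi : i ∈ X) (he : e ∈ G.Term X) : j ∉ X := by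
  simp only [Term, mem_filter, mem_univ, true_and] at he
  rcases ei with ei | ei <;> rcases ej with ej | ej
  · exact absurd (ei.symm.trans ej) hij
  · rw [ei, ej] at he; tauto
  · rw [ei, ej] at he; tauto
  · exact absurd (ei.symm.trans ej) hij

lemma adj_of_onComp {e : G.N} {i j : G.V} (hij : i ≠ j) (ei : G.onComp e i)
    (ej : G.onComp e j) : G.Adj i j := by
  refine ⟨e, ?_⟩
  rcases ei with ei | ei <;> rcases ej with ej | ej
  · exact absurd (ei.symm.trans ej) hij
  · exact Or.inl (Prod.ext ei ej)
  · exact Or.inr (Prod.ext ej ei)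
  · exact absurd (ei.symm.trans ej) hij

/-- Freeness forces a tail containing `i` to contain `j`. -/
lemma mem_of_free {e : G.N} {i j : G.V} (hij : i ≠ j) (ei : G.onComp e i) (ej : G.onComp e j)
    {X Z : Finset G.V} (hX : e ∈ G.Term X) (hf : G.free X Z) (hi : i ∈ Z) : j ∈ Z := by
  by_contra hj
  exact Finset.eq_empty_iff_forall_notMem.mp hf e
    (mem_inter.mpr ⟨hX, mem_Term_of hij ei ej hi hj⟩)

lemma chain_lt {e : G.N} {i j : G.V} (hij : i ≠ j) (ei : G.onComp e i) (ej : G.onComp e j)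
    {M : ℕ} {W : ℕ → Finset G.V} (hi : ∀ t < M, i ∈ W t)
    (hp : ∀ t < M, G.prec (if t = 0 then ∅ else W (t - 1)) (W t)) {s : ℕ} (hs : j ∉ W s) :
    ∀ t, s < t → t < M → j ∈ W t := by
  intro t
  induction t with
  | zero => intro h; omega
  | succ n ih =>
    intro h1 h2
    have hpn := hp (n + 1) h2
    simp only [Nat.add_eq_zero_iff, one_ne_zero, and_false, if_false, Nat.add_sub_cancel] at hpn
    rcases Nat.lt_succ_iff_lt_or_eq.mp h1 with h | h
    · exact hpn.1.1 (ih h (by omega))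
    · subst h
      exact mem_of_free hij ei ej (mem_Term_of hij ei ej (hi s (by omega)) hs) hpn.2 (hi _ h2)

lemma chain_unique {e : G.N} {i j : G.V} (hij : i ≠ j) (ei : G.onComp e i) (ej : G.onComp e j)
    {M : ℕ} {W : ℕ → Finset G.V} (hi : ∀ t < M, i ∈ W t)
    (hp : ∀ t < M, G.prec (if t = 0 then ∅ else W (t - 1)) (W t)) {s t : ℕ} (hsM : s < M)
    (htM : t < M) (hs : j ∉ W s) (ht : j ∉ W t) : W s = W t := by
  rcases lt_trichotomy s t with h | h | h
  · exact absurd (chain_lt hij ei ej hi hp hs t h htM) ht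
  · rw [h]
  · exact absurd (chain_lt hij ei ej hi hp ht s h hsM) hs

/-- The members of `T²_{i,k} ∪ T³_{i,k}`. -/
def Fam (M2 M3 : ℕ) (W2 W3 : ℕ → Finset G.V) (X : Finset G.V) : Prop :=
  (∃ t < M2, W2 t = X) ∨ (∃ t < M3, W3 t = X)

lemma Fam_facts {i k : G.V} {M2 M3 : ℕ} {W2 W3 : ℕ → Finset G.V} (h2 : G.IsNested2 i k M2 W2)
    (h3 : G.IsNested3 i k (G.chainSet M2 W2) M3 W3) {X : Finset G.V} (hX : Fam M2 M3 W2 W3 X) :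
    G.IsTail X ∧ i ∈ X ∧ k ∈ X ∧ G.base ∉ X ∧
    (G.k X = 2 ∨ (G.k X = 3 ∧ ∀ t < M2, G.free X (W2 t))) := by
  rcases hX with ⟨t, ht, rfl⟩ | ⟨t, ht, rfl⟩
  · obtain ⟨a, b, c, d⟩ := (h2.1 t ht).1.1
    exact ⟨a.1, b, c, d, Or.inl a.2⟩
  · obtain ⟨a, b, c, d, f⟩ := (h3.1 t ht).1.1
    exact ⟨a.1, b, c, d, Or.inr ⟨a.2, fun s hs => f _ ⟨s, hs, rfl⟩⟩⟩

lemma Fam_unique {e : G.N} {i j k : G.V} (hij : i ≠ j) (ei : G.onComp e i) (ej : G.onComp e j)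
    {M2 M3 : ℕ} {W2 W3 : ℕ → Finset G.V} (h2 : G.IsNested2 i k M2 W2)
    (h3 : G.IsNested3 i k (G.chainSet M2 W2) M3 W3) {X Y : Finset G.V}
    (hX : Fam M2 M3 W2 W3 X) (hY : Fam M2 M3 W2 W3 Y) (hjX : j ∉ X) (hjY : j ∉ Y) : X = Y := by
  have a2 : ∀ t < M2, i ∈ W2 t := fun t ht => (h2.1 t ht).1.1.2.1
  have a3 : ∀ t < M3, i ∈ W3 t := fun t ht => (h3.1 t ht).1.1.2.1
  have mix : ∀ s < M2, ∀ t < M3, j ∉ W2 s → j ∉ W3 t → False := by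
    intro s hs t ht js jt
    have hf := (h3.1 t ht).1.1.2.2.2.2 _ ⟨s, hs, rfl⟩
    exact js (mem_of_free hij ei ej (mem_Term_of hij ei ej (a3 t ht) jt) hf (a2 s hs))
  rcases hX with ⟨s, hs, rfl⟩ | ⟨s, hs, rfl⟩ <;> rcases hY with ⟨t, ht, rfl⟩ | ⟨t, ht, rfl⟩
  · exact chain_unique hij ei ej a2 (fun t ht => (h2.1 t ht).1.2) hs ht hjX hjY
  · exact (mix s hs t ht hjX hjY).elim
  · exact (mix t ht s hs hjY hjX).elim
  · exact chain_unique hij ei ej a3 (fun t ht => (h3.1 t ht).1.2) hs ht hjX hjY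

lemma Fam_opposite {e : G.N} {i j k : G.V} (hij : i ≠ j) (ei : G.onComp e i) (ej : G.onComp e j)
    {M2i M2j M3i M3j : ℕ} {W2i W2j W3i W3j : ℕ → Finset G.V}
    (h2i : G.IsNested2 i k M2i W2i) (h2j : G.IsNested2 j k M2j W2j)
    (h3i : G.IsNested3 i k (G.chainSet M2i W2i) M3i W3i)
    (h3j : G.IsNested3 j k (G.chainSet M2j W2j) M3j W3j) {X Y : Finset G.V}
    (hX : Fam M2i M3i W2i W3i X) (hY : Fam M2j M3j W2j W3j Y) (hjX : j ∉ X) (hiY : i ∉ Y) :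
    False := by
  obtain ⟨xt, xi, xk, xb, xc⟩ := Fam_facts h2i h3i hX
  obtain ⟨yt, yj, yk, yb, yc⟩ := Fam_facts h2j h3j hY
  have hadj := adj_of_onComp hij ei ej
  obtain ⟨n1, n2, n3, n4, n5⟩ := quad_facts xt yt ⟨xk, yk⟩ ⟨xi, hiY⟩ ⟨hjX, yj⟩ ⟨xb, yb⟩
  have n6 := k_quad X Y
  have n7 : 1 ≤ (G.E (X \ Y) (Y \ X)).card :=
    E_pos_of_adj (mem_sdiff.mpr ⟨xi, hiY⟩) (mem_sdiff.mpr ⟨yj, hjX⟩) hadj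
  have n8 := k_union X Y
  obtain ⟨x3, xf⟩ := xc.resolve_left (by omega)
  obtain ⟨y3, yf⟩ := yc.resolve_left (by omega)
  have bU : G.base ∉ X ∪ Y := by simp [xb, yb]
  have hU : G.IsKTail (X ∪ Y) 2 := by
    refine ⟨⟨fun h => bU (h ▸ mem_univ _), conn_union xt.2.1 yt.2.1 xi yj (Or.inr hadj), ?_⟩,
      by omega⟩
    refine conn_bridge (B := Y \ X) xt.2.2 ?_ ⟨G.base, mem_compl.mpr bU⟩ ?_
      (by rw [E_comm]; omega)
    · ext x; simp only [mem_union, mem_compl, mem_sdiff]; tauto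
    · rw [Finset.disjoint_left]; intro x; simp only [mem_compl, mem_union, mem_sdiff]; tauto
  have cU : G.cond2 i k (X ∪ Y) :=
    ⟨hU, mem_union_left _ xi, mem_union_left _ xk, bU⟩
  have eX := mem_Term_of hij ei ej xi hjX
  have eY := mem_Term_of hij.symm ej ei yj hiY
  have p0 : G.prec ∅ (X ∪ Y) := by
    refine ⟨Finset.ssubset_iff_subset_ne.mpr ⟨empty_subset _, ?_⟩, by simp [Term]⟩
    intro h
    have : i ∈ (∅ : Finset G.V) := h ▸ mem_union_left _ xi
    simp at this
  have step : ∀ t, t < M2i → ∀ p : Finset G.V, (if t = 0 then ∅ else W2i (t - 1)) = p →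
      (if t = 0 then ∅ else W2j (t - 1)) = p → t ≤ M2j → G.prec p (X ∪ Y) →
      t < M2j ∧ W2i t = W2j t ∧ G.prec (W2i t) (X ∪ Y) := by
    intro t ht p hpi hpj htj hpU
    have mi := h2i.1 t ht
    rw [hpi] at mi
    have ji : j ∈ W2i t := mem_of_free hij ei ej eX (xf t ht) mi.1.1.2.1
    have ci : G.cond2 j k (W2i t) := ⟨mi.1.1.1, ji, mi.1.1.2.2.1, mi.1.1.2.2.2⟩
    have htj' : t < M2j := by
      by_contra hcon
      have : t = M2j := by omega
      subst this
      exact h2j.2 ⟨W2i t, ci, by rw [hpj]; exact mi.1.2⟩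
    have mj := h2j.1 t htj'
    rw [hpj] at mj
    have ij : i ∈ W2j t := mem_of_free hij.symm ej ei eY (yf t htj') mj.1.1.2.1
    have heq : W2i t = W2j t :=
      Finset.Subset.antisymm
        (min_le mi ⟨⟨mj.1.1.1, ij, mj.1.1.2.2.1, mj.1.1.2.2.2⟩, mj.1.2⟩)
        (min_le mj ⟨ci, mi.1.2⟩)
    have hsub : W2i t ⊆ X ∪ Y := min_le mi ⟨cU, hpU⟩
    have hdis : G.Term (W2i t) ∩ G.Term (X ∪ Y) = ∅ := by
      rw [Finset.eq_empty_iff_forall_notMem]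
      intro f hf
      rw [mem_inter] at hf
      rcases mem_union.mp (Term_union_subset X Y hf.2) with h | h
      · exact Finset.eq_empty_iff_forall_notMem.mp (xf t ht) f (mem_inter.mpr ⟨h, hf.1⟩)
      · exact Finset.eq_empty_iff_forall_notMem.mp (yf t htj') f
          (mem_inter.mpr ⟨h, heq ▸ hf.1⟩)
    refine ⟨htj', heq, Finset.ssubset_iff_subset_ne.mpr ⟨hsub, ?_⟩, hdis⟩
    intro h
    have h2 := hU.2
    rw [h, inter_self] at hdis
    rw [NodalGraph.k, hdis] at h2
    simp at h2
  have key : ∀ t, t < M2i → t < M2j ∧ W2i t = W2j t ∧ G.prec (W2i t) (X ∪ Y) := by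
    intro t
    induction t with
    | zero =>
      intro ht
      exact step 0 ht ∅ rfl rfl (Nat.zero_le _) p0
    | succ n ih =>
      intro ht
      obtain ⟨q1, q2, q3⟩ := ih (by omega)
      exact step (n + 1) ht (W2i n) (by simp) (by simp [q2]) q1 q3
  by_cases hM : M2i = 0
  · exact h2i.2 ⟨X ∪ Y, cU, by rw [if_pos hM]; exact p0⟩
  · exact h2i.2 ⟨X ∪ Y, cU, by rw [if_neg hM]; exact (key (M2i - 1) (by omega)).2.2⟩

end NodalGraph

open scoped Classical in
/-- inequality (14) of Proposition 3.1: at most one tail in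
`T²_{i,k} ∪ T²_{j,k} ∪ T³_{i,k} ∪ T³_{j,k}` has a terminal point in `C_i ∩ C_j`. -/
theorem at_most_one_tail_terminating_in_meet
    (G : NodalGraph) (hconn : G.Connected) (i j k : G.V)
    (hij : i ≠ j) (hmeet : ∃ e, G.onComp e i ∧ G.onComp e j)
    (M2i M2j M3i M3j : ℕ) (W2i W2j W3i W3j : ℕ → Finset G.V)
    (h2i : G.IsNested2 i k M2i W2i) (h2j : G.IsNested2 j k M2j W2j)
    (h3i : G.IsNested3 i k (G.chainSet M2i W2i) M3i W3i)
    (h3j : G.IsNested3 j k (G.chainSet M2j W2j) M3j W3j) :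
    ((((Finset.range M2i).image W2i ∪ (Finset.range M2j).image W2j ∪
        (Finset.range M3i).image W3i ∪ (Finset.range M3j).image W3j).filter
      (fun Wt => ∃ e, G.onComp e i ∧ G.onComp e j ∧ e ∈ G.Term Wt)).card) ≤ 1 := by
  have fi : ∀ X, (∃ e, G.onComp e i ∧ G.onComp e j ∧ e ∈ G.Term X) →
      NodalGraph.Fam M2i M3i W2i W3i X → j ∉ X := fun X ⟨e, ei, ej, he⟩ hX =>
    NodalGraph.not_mem_of_Term hij ei ej (NodalGraph.Fam_facts h2i h3i hX).2.1 he
  have fj : ∀ X, (∃ e, G.onComp e i ∧ G.onComp e j ∧ e ∈ G.Term X) →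
      NodalGraph.Fam M2j M3j W2j W3j X → i ∉ X := fun X ⟨e, ei, ej, he⟩ hX =>
    NodalGraph.not_mem_of_Term hij.symm ej ei (NodalGraph.Fam_facts h2j h3j hX).2.1 he
  obtain ⟨e, ei, ej⟩ := hmeet
  rw [Finset.card_le_one]
  intro X hX Y hY
  simp only [Finset.mem_filter, Finset.mem_union, Finset.mem_image, Finset.mem_range] at hX hY
  have split : ∀ Z, ((((∃ a, a < M2i ∧ W2i a = Z) ∨ ∃ a, a < M2j ∧ W2j a = Z) ∨
      ∃ a, a < M3i ∧ W3i a = Z) ∨ ∃ a, a < M3j ∧ W3j a = Z) →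
      NodalGraph.Fam M2i M3i W2i W3i Z ∨ NodalGraph.Fam M2j M3j W2j W3j Z := by
    intro Z h
    rcases h with ((h | h) | h) | h
    · exact Or.inl (Or.inl h)
    · exact Or.inr (Or.inl h)
    · exact Or.inl (Or.inr h)
    · exact Or.inr (Or.inr h)
  rcases split X hX.1 with hx | hx <;> rcases split Y hY.1 with hy | hy
  · exact NodalGraph.Fam_unique hij ei ej h2i h3i hx hy (fi X hX.2 hx) (fi Y hY.2 hy)
  · exact (NodalGraph.Fam_opposite hij ei ej h2i h2j h3i h3j hx hy
      (fi X hX.2 hx) (fj Y hY.2 hy)).elim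
  · exact (NodalGraph.Fam_opposite hij ei ej h2i h2j h3i h3j hy hx
      (fi Y hY.2 hy) (fj X hX.2 hx)).elim
  · exact NodalGraph.Fam_unique hij.symm ej ei h2j h3j hx hy (fj X hX.2 hx) (fj Y hY.2 hy)
end

section
/- Let C be a nodal curve with components C_1,…,C_p and marked smooth point σ(0). Fix (i,j,k) with i ≠ j and C_i ∩ C_j ≠ ∅, and fix s ∈ {2,3}. Then the symmetric difference T^s_{i,k|j,k} := (T^s_{i,k} ∪ T^s_{j,k}) ∖ (T^s_{i,k} ∩ T^s_{j,k}) is totally ordered by inclusion; moreover, writing it as {W_0 ⊊ W_1 ⊊ … ⊊ W_m}, each consecutive pair (W_{t−1}, W_t) is terminal, i.e., Term_{W_{t−1}} ∩ Term_{W_t} ≠ ∅. -/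
open Finset

namespace NodalGraph

section Helpers

variable {G : NodalGraph}

lemma mem_Term {Z : Finset G.V} {e : G.N} : e ∈ G.Term Z ↔
    (((G.ends e).1 ∈ Z ∧ (G.ends e).2 ∉ Z) ∨ ((G.ends e).1 ∉ Z ∧ (G.ends e).2 ∈ Z)) := by
  simp [Term]

lemma disj_iff {X Y : Finset G.V} :
    G.Term X ∩ G.Term Y = ∅ ↔ ∀ x, x ∈ G.Term X → x ∉ G.Term Y := by
  rw [← Finset.disjoint_iff_inter_eq_empty, Finset.disjoint_left]

lemma term_sandwich {A B C : Finset G.V} (h1 : A ⊆ B) (h2 : B ⊆ C) {x : G.N}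
    (hA : x ∈ G.Term A) (hC : x ∈ G.Term C) : x ∈ G.Term B := by
  rw [mem_Term] at *
  have a1 := @h1 (G.ends x).1
  have a2 := @h1 (G.ends x).2
  have b1 := @h2 (G.ends x).1
  have b2 := @h2 (G.ends x).2
  tauto

lemma Term_inter_sub {A B : Finset G.V} {x : G.N} (h : x ∈ G.Term (A ∩ B)) :
    x ∈ G.Term A ∨ x ∈ G.Term B := by
  simp only [mem_Term, Finset.mem_inter] at *
  tauto

lemma Term_union_sub {A B : Finset G.V} {x : G.N} (h : x ∈ G.Term (A ∪ B)) :
    x ∈ G.Term A ∨ x ∈ G.Term B := by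
  simp only [mem_Term, Finset.mem_union] at *
  tauto

lemma Term_compl (Z : Finset G.V) : G.Term Zᶜ = G.Term Z := by
  ext x
  simp only [mem_Term, Finset.mem_compl]
  tauto

lemma sub1 (A B : Finset G.V) :
    G.Term (A ∩ B) ∪ G.Term (A ∪ B) ⊆ G.Term A ∪ G.Term B := by
  intro x
  simp only [Finset.mem_union, Finset.mem_inter, mem_Term]
  tauto

lemma sub2 (A B : Finset G.V) :
    G.Term (A ∩ B) ∩ G.Term (A ∪ B) ⊆ G.Term A ∩ G.Term B := by
  intro x
  simp only [Finset.mem_union, Finset.mem_inter, mem_Term]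
  tauto

lemma submod (A B : Finset G.V) : G.k (A ∩ B) + G.k (A ∪ B) ≤ G.k A + G.k B := by
  unfold k
  rw [← Finset.card_union_add_card_inter, ← Finset.card_union_add_card_inter (G.Term A)]
  exact Nat.add_le_add (Finset.card_le_card (sub1 A B)) (Finset.card_le_card (sub2 A B))

lemma submod_edge {A B : Finset G.V} {e : G.N} {i j : G.V}
    (he : G.ends e = (i, j) ∨ G.ends e = (j, i)) (hi : i ∈ A) (hi' : i ∉ B)
    (hj : j ∈ B) (hj' : j ∉ A) :
    G.k (A ∩ B) + G.k (A ∪ B) + 2 ≤ G.k A + G.k B := by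
  have heA : e ∈ G.Term A := by rw [mem_Term]; rcases he with h | h <;> simp [h, *]
  have heB : e ∈ G.Term B := by rw [mem_Term]; rcases he with h | h <;> simp [h, *]
  have heI : e ∉ G.Term (A ∩ B) := by rw [mem_Term]; rcases he with h | h <;> simp [h, *]
  have heU : e ∉ G.Term (A ∪ B) := by rw [mem_Term]; rcases he with h | h <;> simp [h, *]
  unfold k
  rw [← Finset.card_union_add_card_inter, ← Finset.card_union_add_card_inter (G.Term A)]
  have h1 : (G.Term (A ∩ B) ∪ G.Term (A ∪ B)).card < (G.Term A ∪ G.Term B).card := by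
    apply Finset.card_lt_card
    rw [Finset.ssubset_iff_of_subset]
    · exact ⟨e, by simp [heA], by simp [heI, heU]⟩
    · exact sub1 A B
  have h2 : (G.Term (A ∩ B) ∩ G.Term (A ∪ B)).card < (G.Term A ∩ G.Term B).card := by
    apply Finset.card_lt_card
    rw [Finset.ssubset_iff_of_subset]
    · exact ⟨e, by simp [heA, heB], by simp [heI]⟩
    · exact sub2 A B
  omega

/-- A path inside `Z` from `A` to the complement of `A` crosses `Term A`. -/
lemma cross {Z A : Finset G.V} {u v : G.V}
    (h : Relation.ReflTransGen (fun a b => a ∈ Z ∧ b ∈ Z ∧ G.Adj a b) u v)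
    (hu : u ∈ A) (hv : v ∉ A) : ∃ f ∈ G.Term A, G.crosses Z f := by
  induction h with
  | refl => exact absurd hu hv
  | @tail b c _ hbc ih =>
    by_cases hb : b ∈ A
    · obtain ⟨h1, h2, f, hf | hf⟩ := hbc
      · exact ⟨f, by simp [mem_Term, hf, hb, hv], by simp [crosses, hf, h1, h2]⟩
      · exact ⟨f, by simp [mem_Term, hf, hb, hv], by simp [crosses, hf, h1, h2]⟩
    · exact ih hb

lemma Term_nonempty (hc : G.Connected) {A : Finset G.V} {u v : G.V} (hu : u ∈ A) (hv : v ∉ A) :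
    (G.Term A).Nonempty := by
  obtain ⟨f, hf, _⟩ := cross (hc.2 u (mem_univ _) v (mem_univ _)) hu hv
  exact ⟨f, hf⟩

/-- The node lies on a tail with at least two terminal points. -/
def NB (G : NodalGraph) (f : G.N) : Prop := ∃ Y, G.IsTail Y ∧ 2 ≤ G.k Y ∧ f ∈ G.Term Y

lemma conn_sub {Y A : Finset G.V} {f : G.N} (hY : G.ConnSub Y) (hA : G.Term A = {f})
    (hf : ¬ G.crosses Y f) {u : G.V} (hu : u ∈ A) (huY : u ∈ Y) : Y ⊆ A := by
  intro v hv
  by_contra hvA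
  obtain ⟨g, hg, hgY⟩ := cross (hY.2 u huY v hv) hu hvA
  rw [hA, Finset.mem_singleton] at hg
  subst hg
  exact hf hgY

lemma no_bridge_aux {Y A : Finset G.V} {f : G.N} (hY : G.ConnSub Y) (hY' : G.ConnSub Yᶜ)
    (h2 : 2 ≤ G.k Y) (hf : f ∈ G.Term Y) (hA : G.Term A = {f})
    {u v : G.V} (hu : u ∈ A) (huY : u ∈ Y) (hv : v ∉ A) (hvY : v ∉ Y) : False := by
  have h1 : Y ⊆ A := by
    refine conn_sub hY hA ?_ hu huY
    rw [mem_Term] at hf; unfold crosses; tauto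
  have h3 : Yᶜ ⊆ Aᶜ := by
    refine conn_sub (f := f) hY' (by rw [Term_compl, hA]) ?_ (u := v) (by simpa) (by simpa)
    rw [mem_Term] at hf; unfold crosses; simp only [Finset.mem_compl]; tauto
  have : Y = A := Finset.Subset.antisymm h1 (by simpa using h3)
  subst this
  unfold k at h2
  rw [hA] at h2
  simp at h2

lemma no_bridge {A : Finset G.V} {f : G.N} (hf : NB G f) (hA : G.Term A = {f}) : False := by
  obtain ⟨Y, ⟨_, hY, hY'⟩, h2, hfY⟩ := hf
  have hfA : f ∈ G.Term A := by simp [hA]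
  have h2' : 2 ≤ G.k Yᶜ := by unfold k at *; rwa [Term_compl]
  have hfY' : f ∈ G.Term Yᶜ := by rwa [Term_compl]
  have hYcc : G.ConnSub Yᶜᶜ := by simpa using hY
  have hfA' := mem_Term.1 hfA
  have hfYY := mem_Term.1 hfY
  rcases hfA' with ⟨a, b⟩ | ⟨a, b⟩ <;> rcases hfYY with ⟨c, d⟩ | ⟨c, d⟩
  · exact no_bridge_aux hY hY' h2 hfY hA a c b d
  · exact no_bridge_aux hY' hYcc h2' hfY' hA a (by simpa) b (by simpa)
  · exact no_bridge_aux hY' hYcc h2' hfY' hA b (by simpa) a (by simpa)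
  · exact no_bridge_aux hY hY' h2 hfY hA b d a c

lemma two_le_k (hc : G.Connected) {A : Finset G.V} (hN : ∀ f ∈ G.Term A, NB G f)
    {u v : G.V} (hu : u ∈ A) (hv : v ∉ A) : 2 ≤ G.k A := by
  have h := Term_nonempty hc hu hv
  by_contra hlt
  have h1 : (G.Term A).card = 1 := by
    have := h.card_pos
    unfold k at hlt
    omega
  obtain ⟨f, hf⟩ := Finset.card_eq_one.1 h1
  exact no_bridge (hN f (by simp [hf])) hf

lemma aux1 {a b z w : Prop} (h1 : a → z) (h2 : b → w) (h : (a → w → b) ∧ (b → z → a)) :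
    (a ∧ ¬ b ∨ ¬ a ∧ b) → (z ∧ ¬ w ∨ ¬ z ∧ w) := by
  by_cases a <;> by_cases b <;> by_cases z <;> by_cases w <;> simp_all

lemma aux2 {a b z w : Prop} (h1 : a → z) (h2 : b → w) (h : (a → w → b) ∧ (b → z → a)) :
    ((z ∧ ¬ a) ∧ ¬ (w ∧ ¬ b) ∨ ¬ (z ∧ ¬ a) ∧ (w ∧ ¬ b)) → (z ∧ ¬ w ∨ ¬ z ∧ w) := by
  by_cases a <;> by_cases b <;> by_cases z <;> by_cases w <;> simp_all

lemma aux3 {a b z w : Prop} (h1 : a → z) (h2 : b → w) (h : (a → w → b) ∧ (b → z → a)) :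
    (a ∧ ¬ b ∨ ¬ a ∧ b) → ¬ ((z ∧ ¬ a) ∧ ¬ (w ∧ ¬ b) ∨ ¬ (z ∧ ¬ a) ∧ (w ∧ ¬ b)) := by
  by_cases a <;> by_cases b <;> by_cases z <;> by_cases w <;> simp_all

lemma connSub_of (hc : G.Connected) {Z : Finset G.V} (hN : ∀ f ∈ G.Term Z, NB G f)
    {w0 v0 : G.V} (hw0 : w0 ∈ Z) (hv0 : v0 ∉ Z) (h3 : G.k Z ≤ 3) : G.ConnSub Z := by
  classical
  refine ⟨⟨w0, hw0⟩, ?_⟩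
  intro u hu v hv
  by_contra hnot
  set A := Z.filter (fun w =>
    Relation.ReflTransGen (fun a b => a ∈ Z ∧ b ∈ Z ∧ G.Adj a b) u w) with hAdef
  have hAZ : A ⊆ Z := Finset.filter_subset _ _
  have huA : u ∈ A := by simp [hAdef, hu, Relation.ReflTransGen.refl]
  have hvA : v ∉ A := by simp [hAdef, hnot]
  have step : ∀ a b, a ∈ A → b ∈ Z → G.Adj a b → b ∈ A := by
    intro a b ha hb hab
    simp only [hAdef, Finset.mem_filter] at ha ⊢
    exact ⟨hb, ha.2.tail ⟨ha.1, hb, hab⟩⟩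
  have step2 : ∀ f : G.N, (((G.ends f).1 ∈ A → (G.ends f).2 ∈ Z → (G.ends f).2 ∈ A) ∧
      ((G.ends f).2 ∈ A → (G.ends f).1 ∈ Z → (G.ends f).1 ∈ A)) := by
    intro f
    exact ⟨fun h1 h2 => step _ _ h1 h2 ⟨f, Or.inl rfl⟩, fun h1 h2 => step _ _ h1 h2 ⟨f, Or.inr rfl⟩⟩
  have hsubA : G.Term A ⊆ G.Term Z := by
    intro f
    simp only [mem_Term]
    exact aux1 (@hAZ _) (@hAZ _) (step2 f)
  have hsubB : G.Term (Z \ A) ⊆ G.Term Z := by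
    intro f
    simp only [mem_Term, Finset.mem_sdiff]
    exact aux2 (@hAZ _) (@hAZ _) (step2 f)
  have hdis : Disjoint (G.Term A) (G.Term (Z \ A)) := by
    rw [Finset.disjoint_left]
    intro f
    simp only [mem_Term, Finset.mem_sdiff]
    exact aux3 (@hAZ _) (@hAZ _) (step2 f)
  have kA := two_le_k hc (fun f hf => hN f (hsubA hf)) huA hvA
  have kB := two_le_k hc (A := Z \ A) (fun f hf => hN f (hsubB hf)) (u := v) (v := u)
    (by simp [hv, hvA]) (by simp [huA])
  have := Finset.card_le_card (Finset.union_subset hsubA hsubB)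
  rw [Finset.card_union_of_disjoint hdis] at this
  unfold k at *
  omega

lemma isTail_of (hc : G.Connected) {Z : Finset G.V} (hN : ∀ f ∈ G.Term Z, NB G f)
    {w0 v0 : G.V} (hw0 : w0 ∈ Z) (hv0 : v0 ∉ Z) (h3 : G.k Z ≤ 3) : G.IsTail Z := by
  refine ⟨fun h => hv0 (by simp [h]), connSub_of hc hN hw0 hv0 h3, ?_⟩
  refine connSub_of hc (w0 := v0) (v0 := w0) ?_ (by simpa) (by simpa) ?_
  · rwa [Term_compl]
  · unfold k at *; rwa [Term_compl]

lemma NB_of {Z : Finset G.V} {m : ℕ} (hm : 2 ≤ m) (h : G.IsKTail Z m) :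
    ∀ f ∈ G.Term Z, NB G f := fun f hf => ⟨Z, h.1, by rw [h.2]; exact hm, hf⟩

/-- Greedy chains, as lists. -/
def Gr (G : NodalGraph) (P : Finset G.V → Prop) : Finset G.V → List (Finset G.V) → Prop
  | A, [] => ∀ Z, P Z → ¬ G.prec A Z
  | A, C :: L => P C ∧ G.prec A C ∧ (∀ Y, P Y → G.prec A Y → C ⊆ Y) ∧ Gr G P C L

variable {P Q : Finset G.V → Prop}

lemma prec_of_subset {A B C : Finset G.V} (h : A ⊆ B) (h2 : G.prec B C) : G.prec A C := by
  refine ⟨h.trans_ssubset h2.1, disj_iff.2 fun x hx hC => ?_⟩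
  exact disj_iff.1 h2.2 x (term_sandwich h h2.1.1 hx hC) hC

lemma Gr_mem {L : List (Finset G.V)} : ∀ {A : Finset G.V}, Gr G P A L → ∀ Z ∈ L, P Z ∧ G.prec A Z := by
  induction L with
  | nil => intro A _ Z hZ; simp at hZ
  | cons C L ih =>
    intro A h Z hZ
    obtain ⟨h1, h2, h3, h4⟩ := h
    rcases List.mem_cons.1 hZ with rfl | hZ
    · exact ⟨h1, h2⟩
    · obtain ⟨a, b⟩ := ih h4 Z hZ
      exact ⟨a, prec_of_subset h2.1.1 b⟩

lemma Gr_not_mem {L : List (Finset G.V)} {A B : Finset G.V} (h : Gr G P B L) (hAB : A ⊆ B) :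
    A ∉ L := by
  intro hA
  exact absurd rfl (((Gr_mem h A hA).2.1.trans_subset hAB)).ne

lemma Gr_unique {L : List (Finset G.V)} : ∀ {L' : List (Finset G.V)} {A : Finset G.V},
    Gr G P A L → Gr G P A L' → L = L' := by
  induction L with
  | nil =>
    intro L' A h h'
    cases L' with
    | nil => rfl
    | cons C L' => exact absurd h'.2.1 (h C h'.1)
  | cons C L ih =>
    intro L' A h h'
    cases L' with
    | nil => exact absurd h.2.1 (h' C h.1)
    | cons C' L' =>
      have : C = C' := Finset.Subset.antisymm (h.2.2.1 _ h'.1 h'.2.1) (h'.2.2.1 _ h.1 h.2.1)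
      subst this
      rw [ih h.2.2.2 h'.2.2.2]

lemma Gr_congr {L : List (Finset G.V)} : ∀ {A : Finset G.V},
    (∀ Z, G.prec A Z → (P Z ↔ Q Z)) → Gr G P A L → Gr G Q A L := by
  induction L with
  | nil => intro A h h1 Z hZ hp; exact h1 Z ((h Z hp).2 hZ) hp
  | cons C L ih =>
    intro A h h1
    obtain ⟨a, b, c, d⟩ := h1
    exact ⟨(h C b).1 a, b, fun Y hY hp => c Y ((h Y hp).2 hY) hp,
      ih (fun Z hZ => h Z (prec_of_subset b.1.1 hZ)) d⟩

lemma Gr_restrict {L : List (Finset G.V)} : ∀ {A : Finset G.V},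
    (∀ Z, Q Z → P Z) → (∀ Z ∈ L, Q Z) → Gr G P A L → Gr G Q A L := by
  induction L with
  | nil => intro A h _ h1 Z hZ hp; exact h1 Z (h Z hZ) hp
  | cons C L ih =>
    intro A h h0 h1
    obtain ⟨a, b, c, d⟩ := h1
    exact ⟨h0 C (by simp), b, fun Y hY hp => c Y (h Y hY) hp,
      ih h (fun Z hZ => h0 Z (by simp [hZ])) d⟩

lemma Gr_hit (hP : ∀ Z, P Z → (G.Term Z).Nonempty) {L : List (Finset G.V)} :
    ∀ {A Y : Finset G.V}, Gr G P A L → P Y → G.prec A Y →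
    ∃ W ∈ L, ∃ x, x ∈ G.Term W ∧ x ∈ G.Term Y := by
  induction L with
  | nil => intro A Y h hY hp; exact absurd hp (h Y hY)
  | cons C L ih =>
    intro A Y h hY hp
    obtain ⟨a, b, c, d⟩ := h
    by_cases hd : G.Term C ∩ G.Term Y = ∅
    · have hne : C ≠ Y := by
        rintro rfl
        obtain ⟨x, hx⟩ := hP _ hY
        exact disj_iff.1 hd x hx hx
      obtain ⟨W, hW, x, h1, h2⟩ := ih d hY ⟨(c Y hY hp).ssubset_of_ne hne, hd⟩
      exact ⟨W, by simp [hW], x, h1, h2⟩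
    · obtain ⟨x, hx⟩ := Finset.nonempty_iff_ne_empty.2 hd
      rw [Finset.mem_inter] at hx
      exact ⟨C, by simp, x, hx.1, hx.2⟩

/-- Consecutive relation. -/
def CR (G : NodalGraph) (X Y : Finset G.V) : Prop := X ⊂ Y ∧ (G.Term X ∩ G.Term Y).Nonempty

/-- All nodes which are terminal points of a member of the list. -/
def NN (G : NodalGraph) (L : List (Finset G.V)) (x : G.N) : Prop := ∃ W ∈ L, x ∈ G.Term W

/-- List symmetric difference. -/
def SD (G : NodalGraph) (L L' : List (Finset G.V)) (Z : Finset G.V) : Prop :=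
  (Z ∈ L ∧ Z ∉ L') ∨ (Z ∈ L' ∧ Z ∉ L)

lemma NN_cons {C : Finset G.V} {L : List (Finset G.V)} {x : G.N} :
    NN G (C :: L) x ↔ x ∈ G.Term C ∨ NN G L x := by simp [NN]

lemma two_elems {A : Finset G.V} (h : G.k A = 2) {a : G.N} (ha : a ∈ G.Term A) :
    ∃ c, c ≠ a ∧ ∀ x, x ∈ G.Term A ↔ x = a ∨ x = c := by
  obtain ⟨p, q, hpq, hT⟩ := Finset.card_eq_two.1 h
  simp only [hT, Finset.mem_insert, Finset.mem_singleton] at *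
  rcases ha with rfl | rfl
  · exact ⟨q, hpq.symm, fun x => Iff.rfl⟩
  · exact ⟨p, hpq, fun x => or_comm⟩

lemma phase2 (n : ℕ) : ∀ (A B : Finset G.V) (L L' : List (Finset G.V)),
    L.length + L'.length ≤ n → P A → P B → Gr G P A L → Gr G P B L' → CR G A B →
    (∀ Z, P Z → G.prec A Z → B ⊆ Z) →
    (∃ l, List.IsChain (CR G) (A :: l) ∧ ∀ Z, Z ∈ A :: l ↔ SD G (A :: L) (B :: L') Z) ∧
    ((∀ Z, P Z → G.k Z = 2) → ∀ a, a ∈ G.Term A → a ∉ G.Term B →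
      ∃ b, ∀ x, x ≠ a → x ≠ b → (NN G (A :: L) x ↔ NN G (B :: L') x)) := by
  induction n with
  | zero =>
    intro A B L L' hlen hPA hPB hL hL' hAB hmin
    have h1 : L = [] := List.length_eq_zero_iff.1 (by omega)
    have h2 : L' = [] := List.length_eq_zero_iff.1 (by omega)
    subst h1 h2
    constructor
    · refine ⟨[B], by simp [hAB], fun Z => ?_⟩
      have := hAB.1.ne
      simp only [SD, List.mem_cons, List.not_mem_nil, or_false]
      constructor
      · rintro (rfl | rfl)
        · exact Or.inl ⟨rfl, this⟩
        · exact Or.inr ⟨rfl, this.symm⟩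
      · tauto
    · intro hk a ha hb
      obtain ⟨c, hca, hc⟩ := two_elems (hk A hPA) ha
      obtain ⟨y, hy⟩ := hAB.2
      rw [Finset.mem_inter, hc] at hy
      have hcB : c ∈ G.Term B := by
        rcases hy with ⟨rfl | rfl, h⟩
        · exact absurd h hb
        · exact h
      obtain ⟨b, hbc, hbB⟩ := two_elems (hk B hPB) hcB
      refine ⟨b, fun x hx hxb => ?_⟩
      simp [NN, hc, hbB, hx, hxb]
  | succ n ih =>
    intro A B L L' hlen hPA hPB hL hL' hAB hmin
    cases L with
    | nil =>
      cases L' with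
      | nil => 
        exact ih A B [] [] (by simp) hPA hPB hL hL' hAB hmin
      | cons C' L'' =>
        exact absurd (prec_of_subset hAB.1.1 hL'.2.1) (hL C' hL'.1)
    | cons C L1 =>
      have hL0 := hL
      obtain ⟨hC1, hC2, hC3, hC4⟩ := hL
      have hBC : B ⊂ C := by
        refine (hmin C hC1 hC2).ssubset_of_ne ?_
        rintro rfl
        have h2 := hAB.2
        rw [hC2.2] at h2
        exact Finset.not_nonempty_empty h2
      have hAn : A ∉ B :: L' := by
        simp only [List.mem_cons, not_or]
        exact ⟨hAB.1.ne, Gr_not_mem hL' hAB.1.1⟩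
      by_cases hd : G.Term B ∩ G.Term C = ∅
      · have hpBC : G.prec B C := ⟨hBC, hd⟩
        cases L' with
        | nil => exact absurd hpBC (hL' C hC1)
        | cons C' L'' =>
          have hL'0 := hL'
          obtain ⟨d1, d2, d3, d4⟩ := hL'
          have hCC : C = C' := Finset.Subset.antisymm
            (hC3 C' d1 (prec_of_subset hAB.1.1 d2)) (d3 C hC1 hpBC)
          subst hCC
          have hLL := Gr_unique hC4 d4
          subst hLL
          have hAn2 : A ∉ C :: L1 := Gr_not_mem hL0 (Finset.Subset.refl _)
          have hBn2 : B ∉ C :: L1 := Gr_not_mem hL'0 (Finset.Subset.refl _)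
          constructor
          · refine ⟨[B], by simp [hAB], fun Z => ?_⟩
            have hne := hAB.1.ne
            simp only [SD, List.mem_cons (a := Z) (b := A), List.mem_cons (a := Z) (b := B),
              List.not_mem_nil, or_false]
            constructor
            · rintro (rfl | rfl)
              · tauto
              · have := hne.symm
                tauto
            · tauto
          · intro hk a ha hb
            obtain ⟨c, hca, hc⟩ := two_elems (hk A hPA) ha
            obtain ⟨y, hy⟩ := hAB.2
            rw [Finset.mem_inter, hc] at hy
            have hcB : c ∈ G.Term B := by
              rcases hy with ⟨rfl | rfl, h⟩
              · exact absurd h hb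
              · exact h
            obtain ⟨b, hbc, hbB⟩ := two_elems (hk B hPB) hcB
            refine ⟨b, fun x hx hxb => ?_⟩
            rw [NN_cons, NN_cons (C := B), hc, hbB]
            tauto
      · have hCR : CR G B C := ⟨hBC, Finset.nonempty_iff_ne_empty.2 hd⟩
        obtain ⟨⟨l, hl1, hl2⟩, hN⟩ := ih B C L' L1 (by simp at hlen; omega) hPB hC1 hL' hC4 hCR
          (fun Z hZ hp => hC3 Z hZ (prec_of_subset hAB.1.1 hp))
        constructor
        · refine ⟨B :: l, List.isChain_cons_cons.2 ⟨hAB, hl1⟩, fun Z => ?_⟩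
          rw [List.mem_cons, hl2]
          simp only [SD, List.mem_cons (a := Z) (b := A)]
          have hAn2 : A ∉ C :: L1 := Gr_not_mem hL0 (Finset.Subset.refl _)
          by_cases hZA : Z = A
          · subst hZA; tauto
          · tauto
        · intro hk a ha hb
          obtain ⟨c, hca, hc⟩ := two_elems (hk A hPA) ha
          obtain ⟨y, hy⟩ := hAB.2
          rw [Finset.mem_inter, hc] at hy
          have hcB : c ∈ G.Term B := by
            rcases hy with ⟨rfl | rfl, h⟩
            · exact absurd h hb
            · exact h
          have hcA : c ∈ G.Term A := by simp [hc]
          obtain ⟨b', hb'⟩ := hN hk c hcB (disj_iff.1 hC2.2 c hcA)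
          refine ⟨b', fun x hx hxb => ?_⟩
          by_cases hxc : x = c
          · subst hxc
            rw [NN_cons, NN_cons (C := B)]
            tauto
          · rw [NN_cons (C := A), ← hb' x hxc hxb, hc]
            tauto

lemma phase1 {f : G.N} (hQ : ∀ Z, Q Z ↔ P Z ∧ f ∉ G.Term Z) {L : List (Finset G.V)} :
    ∀ {L' : List (Finset G.V)} {A : Finset G.V}, Gr G P A L → Gr G Q A L' →
    (∃ l, List.IsChain (CR G) l ∧ ∀ Z, Z ∈ l ↔ SD G L L' Z) ∧
    ((∀ Z, P Z → G.k Z = 2) → 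
      ∃ b, ∀ x, x ≠ f → x ≠ b → (NN G L x ↔ NN G L' x)) := by
  induction L with
  | nil =>
    intro L' A h h'
    cases L' with
    | nil => exact ⟨⟨[], by simp, by simp [SD]⟩, fun _ => ⟨f, fun _ _ _ => Iff.rfl⟩⟩
    | cons C L' => exact absurd h'.2.1 (h C ((hQ C).1 h'.1).1)
  | cons C L1 ih =>
    intro L' A h h'
    have h0 := h
    obtain ⟨hC1, hC2, hC3, hC4⟩ := h
    have hCn : C ∉ L1 := Gr_not_mem hC4 (Finset.Subset.refl _)
    by_cases hf : f ∈ G.Term C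
    · cases L' with
      | nil =>
        have hL1 : L1 = [] := by
          cases L1 with
          | nil => rfl
          | cons C' L2 =>
            exfalso
            refine h' C' ((hQ C').2 ⟨hC4.1, ?_⟩) (prec_of_subset hC2.1.1 hC4.2.1)
            exact disj_iff.1 hC4.2.1.2 f hf
        subst hL1
        refine ⟨⟨[C], by simp, by simp [SD]⟩, fun hk => ?_⟩
        obtain ⟨c, _, hc⟩ := two_elems (hk C hC1) hf
        refine ⟨c, fun x hx hxc => ?_⟩
        simp [NN, hc, hx, hxc]
      | cons B L'' =>
        have h'0 := h'
        obtain ⟨d1, d2, d3, d4⟩ := h'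
        obtain ⟨d1P, d1f⟩ := (hQ B).1 d1
        have hCB : C ⊂ B := by
          refine (hC3 B d1P d2).ssubset_of_ne ?_
          rintro rfl
          exact d1f hf
        have hmin : ∀ Z, P Z → G.prec C Z → B ⊆ Z := by
          intro Z hZ hp
          exact d3 Z ((hQ Z).2 ⟨hZ, disj_iff.1 hp.2 f hf⟩) (prec_of_subset hC2.1.1 hp)
        have d4' : Gr G P B L'' := by
          refine Gr_congr (fun Z hZ => ?_) d4
          rw [hQ]
          refine ⟨fun h => h.1, fun h => ⟨h, fun hfZ => ?_⟩⟩
          exact d1f (term_sandwich hCB.1 hZ.1.1 hf hfZ)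
        by_cases hd : G.Term C ∩ G.Term B = ∅
        · have hp : G.prec C B := ⟨hCB, hd⟩
          have hL1 : L1 = B :: L'' := by
            refine Gr_unique hC4 ?_
            exact ⟨d1P, hp, hmin, d4'⟩
          subst hL1
          constructor
          · refine ⟨[C], by simp, fun Z => ?_⟩
            simp only [SD, List.mem_cons (a := Z) (b := C), List.not_mem_nil, or_false]
            constructor
            · rintro rfl
              tauto
            · tauto
          · intro hk
            obtain ⟨c, _, hc⟩ := two_elems (hk C hC1) hf
            refine ⟨c, fun x hx hxc => ?_⟩
            rw [NN_cons, hc]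
            tauto
        · obtain ⟨⟨l, hl⟩, hN⟩ := phase2 _ C B L1 L'' le_rfl hC1 d1P hC4 d4'
            ⟨hCB, Finset.nonempty_iff_ne_empty.2 hd⟩ hmin
          exact ⟨⟨_, hl⟩, fun hk => hN hk f hf d1f⟩
    · have hQC : Q C := (hQ C).2 ⟨hC1, hf⟩
      cases L' with
      | nil => exact absurd hC2 (h' C hQC)
      | cons B L'' =>
        obtain ⟨d1, d2, d3, d4⟩ := h'
        have : C = B := Finset.Subset.antisymm (hC3 B ((hQ B).1 d1).1 d2) (d3 C hQC hC2)
        subst this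
        obtain ⟨⟨l, hl1, hl2⟩, hN⟩ := ih hC4 d4
        have hCn' : C ∉ L'' := Gr_not_mem d4 (Finset.Subset.refl _)
        constructor
        · refine ⟨l, hl1, fun Z => ?_⟩
          rw [hl2]
          simp only [SD, List.mem_cons]
          by_cases hZ : Z = C
          · subst hZ; tauto
          · tauto
        · intro hk
          obtain ⟨b, hb⟩ := hN hk
          refine ⟨b, fun x hx hxb => ?_⟩
          rw [NN_cons, NN_cons, hb x hx hxb]

/-- The conclusion of the theorem. -/
def Concl (G : NodalGraph) (D : Set (Finset G.V)) : Prop :=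
    (∀ Wt ∈ D, ∀ Wt' ∈ D, Wt ⊆ Wt' ∨ Wt' ⊆ Wt) ∧
    (∀ Wt ∈ D, ∀ Wt' ∈ D, Wt ⊂ Wt' →
      (¬ ∃ Wt'' ∈ D, Wt ⊂ Wt'' ∧ Wt'' ⊂ Wt') →
      (G.Term Wt ∩ G.Term Wt').Nonempty)

lemma chain_lt_s9 {l : List (Finset G.V)} : ∀ {A : Finset G.V}, List.IsChain (CR G) (A :: l) →
    ∀ Z ∈ l, A ⊂ Z := by
  induction l with
  | nil => intro A _ Z hZ; simp at hZ
  | cons B l ih =>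
    intro A h Z hZ
    obtain ⟨h1, h2⟩ := List.isChain_cons_cons.1 h
    rcases List.mem_cons.1 hZ with rfl | hZ
    · exact h1.1
    · exact h1.1.trans (ih h2 Z hZ)

lemma concl_of_chain {l : List (Finset G.V)} (h : List.IsChain (CR G) l) :
    Concl G {Z | Z ∈ l} := by
  induction l with
  | nil => simp [Concl]
  | cons A l ih =>
    have hlt := chain_lt_s9 h
    obtain ⟨i1, i2⟩ := ih h.tail
    constructor
    · intro X hX Y hY
      rcases List.mem_cons.1 hX with hX1 | hX2
      · subst hX1
        rcases List.mem_cons.1 hY with hY1 | hY2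
        · subst hY1
          exact Or.inl (Finset.Subset.refl _)
        · exact Or.inl (hlt Y hY2).1
      · rcases List.mem_cons.1 hY with hY1 | hY2
        · subst hY1
          exact Or.inr (hlt X hX2).1
        · exact i1 X hX2 Y hY2
    · intro X hX Y hY hXY hno
      rcases List.mem_cons.1 hX with hX1 | hX2
      · subst hX1
        rcases List.mem_cons.1 hY with hY1 | hY2
        · exact absurd hY1.symm hXY.ne
        · cases l with
          | nil => simp at hY2
          | cons B l =>
            obtain ⟨h1, h2⟩ := List.isChain_cons_cons.1 h
            rcases List.mem_cons.1 hY2 with hY3 | hY3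
            · subst hY3
              exact h1.2
            · exact absurd ⟨B, by simp, h1.1, chain_lt_s9 h2 Y hY3⟩ hno
      · rcases List.mem_cons.1 hY with hY1 | hY2
        · subst hY1
          exact absurd rfl (hXY.trans (hlt X hX2)).ne
        · refine i2 X hX2 Y hY2 hXY ?_
          rintro ⟨Z, hZ, hZ'⟩
          exact hno ⟨Z, List.mem_cons_of_mem _ hZ, hZ'⟩

lemma concl_of_Gr {f : G.N} (hQ : ∀ Z, Q Z ↔ P Z ∧ f ∉ G.Term Z) {L L' : List (Finset G.V)}
    {A : Finset G.V} (h : Gr G P A L) (h' : Gr G Q A L') : Concl G {Z | SD G L L' Z} := by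
  obtain ⟨⟨l, hl1, hl2⟩, _⟩ := phase1 hQ h h'
  have := concl_of_chain hl1
  convert this using 1
  ext Z
  exact (hl2 Z).symm

lemma SD_comm (L L' : List (Finset G.V)) : {Z | SD G L L' Z} = {Z | SD G L' L Z} := by
  ext Z; simp only [SD, Set.mem_ofPred_eq]; tauto

/-- Indexed chains to lists. -/
lemma exists_Gr (hI : ∀ X Y, P X → P Y → P (X ∩ Y)) (hP : ∀ Z, P Z → (G.Term Z).Nonempty)
    {M : ℕ} {W : ℕ → Finset G.V}
    (h : (∀ t < M, Minimal (fun Z => P Z ∧ G.prec (if t = 0 then ∅ else W (t - 1)) Z) (W t)) ∧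
      ¬ ∃ Z, P Z ∧ G.prec (if M = 0 then ∅ else W (M - 1)) Z) :
    ∃ L, Gr G P ∅ L ∧ G.chainSet M W = {Z | Z ∈ L} := by
  have key : ∀ d t, t + d = M → ∃ L, Gr G P (if t = 0 then ∅ else W (t - 1)) L ∧
      ∀ Z, Z ∈ L ↔ ∃ r, t ≤ r ∧ r < M ∧ W r = Z := by
    intro d
    induction d with
    | zero =>
      intro t ht
      have : t = M := by omega
      subst this
      refine ⟨[], fun Z hZ hp => h.2 ⟨Z, hZ, hp⟩, fun Z => ?_⟩
      simp only [List.not_mem_nil, false_iff]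
      rintro ⟨r, h1, h2, _⟩
      omega
    | succ d ih =>
      intro t ht
      obtain ⟨L, hL, hm⟩ := ih (t + 1) (by omega)
      simp only [Nat.add_eq_zero_iff, one_ne_zero, and_false, if_false, Nat.add_sub_cancel] at hL
      have hmin := h.1 t (by omega)
      refine ⟨W t :: L, ⟨hmin.prop.1, hmin.prop.2, ?_, hL⟩, ?_⟩
      · intro Y hY hp
        have hI' := hI _ _ hmin.prop.1 hY
        have hdis : G.Term (if t = 0 then ∅ else W (t - 1)) ∩ G.Term (W t ∩ Y) = ∅ := by
          rw [disj_iff]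
          intro x hx hx'
          rcases Term_inter_sub hx' with h1 | h1
          · exact disj_iff.1 hmin.prop.2.2 x hx h1
          · exact disj_iff.1 hp.2 x hx h1
        have := hmin.le_of_le (y := W t ∩ Y) ⟨hI', ⟨?_, hdis⟩⟩ Finset.inter_subset_left
        · exact this.trans Finset.inter_subset_right
        · refine (Finset.subset_inter hmin.prop.2.1.1 hp.1.1).ssubset_of_ne ?_
          intro heq
          obtain ⟨x, hx⟩ := hP _ hI'
          exact disj_iff.1 hdis x (heq ▸ hx) hx
      · intro Z
        rw [List.mem_cons, hm]
        constructor
        · rintro (rfl | ⟨r, h1, h2, h3⟩)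
          · exact ⟨t, le_rfl, by omega, rfl⟩
          · exact ⟨r, by omega, h2, h3⟩
        · rintro ⟨r, h1, h2, h3⟩
          by_cases hr : r = t
          · subst hr; exact Or.inl h3.symm
          · exact Or.inr ⟨r, by omega, h2, h3⟩
  obtain ⟨L, hL, hm⟩ := key M 0 (by omega)
  refine ⟨L, by simpa using hL, ?_⟩
  ext Z
  simp only [chainSet, Set.mem_ofPred_eq, hm]
  simp

lemma Term_ne_of_k {Z : Finset G.V} {m : ℕ} (h : G.k Z = m) (hm : 0 < m) : (G.Term Z).Nonempty := by
  rw [← Finset.card_pos]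
  unfold k at h
  omega

lemma prec_empty {Z : Finset G.V} {a : G.V} (ha : a ∈ Z) : G.prec ∅ Z := by
  refine ⟨Finset.empty_ssubset.2 ⟨a, ha⟩, ?_⟩
  have : G.Term (∅ : Finset G.V) = ∅ := by simp [Term]
  simp [this]

/-- Basic package for the intersection and union of two tails. -/
lemma pair_facts (hc : G.Connected) {A B : Finset G.V} {m n : ℕ} (hm : 2 ≤ m) (hn : 2 ≤ n)
    (hA : G.IsKTail A m) (hB : G.IsKTail B n) {κ : G.V} (kA : κ ∈ A) (kB : κ ∈ B)
    (bA : G.base ∉ A) (bB : G.base ∉ B) :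
    2 ≤ G.k (A ∩ B) ∧ 2 ≤ G.k (A ∪ B) ∧ (G.k (A ∩ B) ≤ 3 → G.IsTail (A ∩ B)) ∧
      (G.k (A ∪ B) ≤ 3 → G.IsTail (A ∪ B)) := by
  have NI : ∀ f ∈ G.Term (A ∩ B), NB G f := fun f hf =>
    (Term_inter_sub hf).elim (NB_of hm hA f) (NB_of hn hB f)
  have NU : ∀ f ∈ G.Term (A ∪ B), NB G f := fun f hf =>
    (Term_union_sub hf).elim (NB_of hm hA f) (NB_of hn hB f)
  have m1 : κ ∈ A ∩ B := by simp [kA, kB]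
  have m2 : G.base ∉ A ∩ B := by simp [bA]
  have m3 : κ ∈ A ∪ B := by simp [kA]
  have m4 : G.base ∉ A ∪ B := by simp [bA, bB]
  exact ⟨two_le_k hc NI m1 m2, two_le_k hc NU m3 m4, isTail_of hc NI m1 m2, isTail_of hc NU m3 m4⟩

lemma cond2_inter (hc : G.Connected) {i κ : G.V} (X Y : Finset G.V) (hX : G.cond2 i κ X)
    (hY : G.cond2 i κ Y) : G.cond2 i κ (X ∩ Y) := by
  obtain ⟨a1, a2, a3, a4⟩ := hX
  obtain ⟨b1, b2, b3, b4⟩ := hY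
  obtain ⟨c1, c2, c3, c4⟩ := pair_facts hc le_rfl le_rfl a1 b1 a3 b3 a4 b4
  have := submod X Y
  rw [a1.2, b1.2] at this
  exact ⟨⟨c3 (by omega), by omega⟩, by simp [a2, b2], by simp [a3, b3], by simp [a4]⟩

lemma cond2_ne {i κ : G.V} (Z : Finset G.V) (h : G.cond2 i κ Z) : (G.Term Z).Nonempty :=
  Term_ne_of_k h.1.2 (by norm_num)

lemma cond3_ne {i κ : G.V} {S : Set (Finset G.V)} (Z : Finset G.V) (h : G.cond3 i κ S Z) :
    (G.Term Z).Nonempty :=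
  Term_ne_of_k h.1.2 (by norm_num)

lemma free_iff {L : List (Finset G.V)} {Z : Finset G.V} :
    (∀ W ∈ {Z | Z ∈ L}, G.free Z W) ↔ ∀ x ∈ G.Term Z, ¬ NN G L x := by
  simp only [free, disj_iff, NN, Set.mem_ofPred_eq]
  constructor
  · rintro h x hx ⟨W, hW, hxW⟩
    exact h W hW x hx hxW
  · intro h W hW x hx hxW
    exact h x hx ⟨W, hW, hxW⟩

lemma cond2_hit {i κ : G.V} {L : List (Finset G.V)} (hL : Gr G (G.cond2 i κ) ∅ L)
    {Y : Finset G.V} (hY : G.cond2 i κ Y) : ∃ x ∈ G.Term Y, NN G L x := by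
  obtain ⟨W, hW, x, h1, h2⟩ := Gr_hit cond2_ne hL hY (prec_empty hY.2.1)
  exact ⟨x, h2, W, hW, h1⟩

lemma cond3_inter (hc : G.Connected) {i κ : G.V} {L : List (Finset G.V)}
    (hL : Gr G (G.cond2 i κ) ∅ L) (X Y : Finset G.V) (hX : G.cond3 i κ {Z | Z ∈ L} X)
    (hY : G.cond3 i κ {Z | Z ∈ L} Y) : G.cond3 i κ {Z | Z ∈ L} (X ∩ Y) := by
  obtain ⟨a1, a2, a3, a4, a5⟩ := hX
  obtain ⟨b1, b2, b3, b4, b5⟩ := hY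
  obtain ⟨c1, c2, c3, c4⟩ := pair_facts hc (by norm_num) (by norm_num) a1 b1 a3 b3 a4 b4
  have hs := submod X Y
  rw [a1.2, b1.2] at hs
  rw [free_iff] at a5 b5
  have n1 : G.k (X ∩ Y) ≠ 2 := by
    intro h2
    obtain ⟨x, hx, hN⟩ := cond2_hit hL (Y := X ∩ Y)
      ⟨⟨c3 (by omega), h2⟩, by simp [a2, b2], by simp [a3, b3], by simp [a4]⟩
    exact (Term_inter_sub hx).elim (fun h => a5 x h hN) (fun h => b5 x h hN)
  have n2 : G.k (X ∪ Y) ≠ 2 := by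
    intro h2
    obtain ⟨x, hx, hN⟩ := cond2_hit hL (Y := X ∪ Y)
      ⟨⟨c4 (by omega), h2⟩, by simp [a2], by simp [a3], by simp [a4, b4]⟩
    exact (Term_union_sub hx).elim (fun h => a5 x h hN) (fun h => b5 x h hN)
  refine ⟨⟨c3 (by omega), by omega⟩, by simp [a2, b2], by simp [a3, b3], by simp [a4], ?_⟩
  rw [free_iff]
  intro x hx
  exact (Term_inter_sub hx).elim (fun h => a5 x h) (fun h => b5 x h)

lemma mem_e {e : G.N} {i j : G.V} (he : G.ends e = (i, j) ∨ G.ends e = (j, i)) {Z : Finset G.V} :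
    e ∈ G.Term Z ↔ (i ∈ Z ∧ j ∉ Z) ∨ (i ∉ Z ∧ j ∈ Z) := by
  rw [mem_Term]
  rcases he with h | h <;> rw [h] <;> simp only <;> tauto

/-- For 2-tails one of the two chains consists of sets containing both components. -/
lemma two_dichotomy (hc : G.Connected) {e : G.N} {i j κ : G.V}
    (he : G.ends e = (i, j) ∨ G.ends e = (j, i)) {Li Lj : List (Finset G.V)}
    (hi : Gr G (G.cond2 i κ) ∅ Li) (hj : Gr G (G.cond2 j κ) ∅ Lj) :
    (∀ Z ∈ Li, j ∈ Z) ∨ (∀ Z ∈ Lj, i ∈ Z) := by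
  by_contra hcon
  push Not at hcon
  obtain ⟨⟨A, hA, hjA⟩, ⟨B, hB, hiB⟩⟩ := hcon
  obtain ⟨a1, a2, a3, a4⟩ := (Gr_mem hi A hA).1
  obtain ⟨b1, b2, b3, b4⟩ := (Gr_mem hj B hB).1
  obtain ⟨c1, c2, c3, c4⟩ := pair_facts hc le_rfl le_rfl a1 b1 a3 b3 a4 b4
  have := submod_edge he a2 hiB b2 hjA
  rw [a1.2, b1.2] at this
  omega

/-- If the chain for `i` consists of sets containing `j`, it is greedy for a restricted family. -/
lemma two_restrict {e : G.N} {i j κ : G.V}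
    (he : G.ends e = (i, j) ∨ G.ends e = (j, i)) {Li : List (Finset G.V)}
    (hi : Gr G (G.cond2 i κ) ∅ Li) (h : ∀ Z ∈ Li, j ∈ Z) :
    Gr G (fun Z => G.cond2 j κ Z ∧ e ∉ G.Term Z) ∅ Li := by
  refine Gr_restrict ?_ ?_ hi
  · rintro Z ⟨⟨h1, h2, h3, h4⟩, h5⟩
    rw [mem_e he] at h5
    exact ⟨h1, by tauto, h3, h4⟩
  · intro Z hZ
    obtain ⟨a1, a2, a3, a4⟩ := (Gr_mem hi Z hZ).1
    have := h Z hZ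
    refine ⟨⟨a1, this, a3, a4⟩, ?_⟩
    rw [mem_e he]
    tauto

lemma two_case (hc : G.Connected) {e : G.N} {i j κ : G.V}
    (he : G.ends e = (i, j) ∨ G.ends e = (j, i)) {Li Lj : List (Finset G.V)}
    (hi : Gr G (G.cond2 i κ) ∅ Li) (hj : Gr G (G.cond2 j κ) ∅ Lj) :
    Concl G {Z | SD G Li Lj Z} := by
  rcases two_dichotomy hc he hi hj with h | h
  · rw [SD_comm]
    exact concl_of_Gr (fun Z => Iff.rfl) hj (two_restrict he hi h)
  · exact concl_of_Gr (fun Z => Iff.rfl) hi (two_restrict he.symm hj h)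

lemma three_restrict {e : G.N} {i j κ : G.V}
    (he : G.ends e = (i, j) ∨ G.ends e = (j, i)) {S : Set (Finset G.V)} {Li : List (Finset G.V)}
    (hi : Gr G (G.cond3 i κ S) ∅ Li) (h : ∀ Z ∈ Li, j ∈ Z) :
    Gr G (fun Z => G.cond3 j κ S Z ∧ e ∉ G.Term Z) ∅ Li := by
  refine Gr_restrict ?_ ?_ hi
  · rintro Z ⟨⟨h1, h2, h3, h4, h6⟩, h5⟩
    rw [mem_e he] at h5
    exact ⟨h1, by tauto, h3, h4, h6⟩
  · intro Z hZ
    obtain ⟨a1, a2, a3, a4, a5⟩ := (Gr_mem hi Z hZ).1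
    have := h Z hZ
    refine ⟨⟨a1, this, a3, a4, a5⟩, ?_⟩
    rw [mem_e he]
    tauto

/-- Both components in, 3-tail, free of the nodes of `L`. -/
def B3 (G : NodalGraph) (i j κ : G.V) (L : List (Finset G.V)) (Z : Finset G.V) : Prop :=
  G.IsKTail Z 3 ∧ i ∈ Z ∧ j ∈ Z ∧ κ ∈ Z ∧ G.base ∉ Z ∧ ∀ x ∈ G.Term Z, ¬ NN G L x

lemma three_case (hc : G.Connected) {e : G.N} {i j κ : G.V}
    (he : G.ends e = (i, j) ∨ G.ends e = (j, i)) {Li Lj Ki Kj : List (Finset G.V)}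
    (hi : Gr G (G.cond2 i κ) ∅ Li) (hj : Gr G (G.cond2 j κ) ∅ Lj)
    (gi : Gr G (G.cond3 i κ {Z | Z ∈ Li}) ∅ Ki) (gj : Gr G (G.cond3 j κ {Z | Z ∈ Lj}) ∅ Kj)
    (hall : ∀ Z ∈ Li, j ∈ Z) :
    Concl G {Z | SD G Ki Kj Z} := by
  have ri := two_restrict he hi hall
  by_cases hall' : ∀ Z ∈ Lj, i ∈ Z
  · -- the two chains of 2-tails agree
    have rj : Gr G (fun Z => G.cond2 j κ Z ∧ e ∉ G.Term Z) ∅ Lj := by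
      refine Gr_restrict (fun Z hZ => hZ.1) ?_ hj
      intro Z hZ
      have h1 := (Gr_mem hj Z hZ).1
      refine ⟨h1, ?_⟩
      rw [mem_e he]
      have := hall' Z hZ
      have := h1.2.1
      tauto
    have hEq := Gr_unique ri rj
    subst hEq
    have dich : (∀ Z ∈ Ki, j ∈ Z) ∨ (∀ Z ∈ Kj, i ∈ Z) := by
      by_contra hcon
      push Not at hcon
      obtain ⟨⟨A, hA, hjA⟩, ⟨B, hB, hiB⟩⟩ := hcon
      obtain ⟨a1, a2, a3, a4, a5⟩ := (Gr_mem gi A hA).1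
      obtain ⟨b1, b2, b3, b4, b5⟩ := (Gr_mem gj B hB).1
      obtain ⟨c1, c2, c3, c4⟩ := pair_facts hc (by norm_num) (by norm_num) a1 b1 a3 b3 a4 b4
      have := submod_edge he a2 hiB b2 hjA
      rw [a1.2, b1.2] at this
      rw [free_iff] at a5 b5
      obtain ⟨x, hx, hN⟩ := cond2_hit hi (Y := A ∪ B)
        ⟨⟨c4 (by omega), by omega⟩, by simp [a2], by simp [a3], by simp [a4, b4]⟩
      exact (Term_union_sub hx).elim (fun h => a5 x h hN) (fun h => b5 x h hN)
    rcases dich with h | h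
    · rw [SD_comm]
      exact concl_of_Gr (fun Z => Iff.rfl) gj (three_restrict he gi h)
    · exact concl_of_Gr (fun Z => Iff.rfl) gi (three_restrict he.symm gj h)
  · push Not at hall'
    obtain ⟨W, hW, hiW⟩ := hall'
    obtain ⟨w1, w2, w3, w4⟩ := (Gr_mem hj W hW).1
    have heW : e ∈ G.Term W := by rw [mem_e he]; tauto
    have jKi : ∀ Z ∈ Ki, j ∈ Z := by
      intro A hA
      by_contra hjA
      obtain ⟨a1, a2, a3, a4, a5⟩ := (Gr_mem gi A hA).1
      obtain ⟨c1, c2, c3, c4⟩ := pair_facts hc (by norm_num) le_rfl a1 w1 a3 w3 a4 w4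
      have := submod_edge he a2 hiW w2 hjA
      rw [a1.2, w1.2] at this
      omega
    have iKj : ∀ Z ∈ Kj, i ∈ Z := by
      intro B hB
      by_contra hiB
      obtain ⟨b1, b2, b3, b4, b5⟩ := (Gr_mem gj B hB).1
      rw [free_iff] at b5
      exact b5 e (by rw [mem_e he]; tauto) ⟨W, hW, heW⟩
    obtain ⟨f, hf⟩ := (phase1 (fun Z => Iff.rfl) hj ri).2 (fun Z hZ => hZ.1.2)
    have bi : Gr G (B3 G i j κ Li) ∅ Ki := by
      refine Gr_restrict ?_ ?_ gi
      · rintro Z ⟨z1, z2, z3, z4, z5, z6⟩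
        exact ⟨z1, z2, z4, z5, free_iff.2 z6⟩
      · intro Z hZ
        obtain ⟨a1, a2, a3, a4, a5⟩ := (Gr_mem gi Z hZ).1
        exact ⟨a1, a2, jKi Z hZ, a3, a4, free_iff.1 a5⟩
    have bj : Gr G (B3 G i j κ Lj) ∅ Kj := by
      refine Gr_restrict ?_ ?_ gj
      · rintro Z ⟨z1, z2, z3, z4, z5, z6⟩
        exact ⟨z1, z3, z4, z5, free_iff.2 z6⟩
      · intro Z hZ
        obtain ⟨a1, a2, a3, a4, a5⟩ := (Gr_mem gj Z hZ).1
        exact ⟨a1, iKj Z hZ, a2, a3, a4, free_iff.1 a5⟩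
    have ne : ∀ L Z, B3 G i j κ L Z → ∀ x ∈ G.Term Z, x ≠ e := by
      rintro L Z ⟨z1, z2, z3, z4, z5, z6⟩ x hx rfl
      rw [mem_e he] at hx
      tauto
    by_cases fj : NN G Lj f
    · refine concl_of_Gr (f := f) (fun Z => ?_) bi bj
      constructor
      · intro h
        have hne := ne _ _ h
        obtain ⟨z1, z2, z3, z4, z5, z6⟩ := h
        have hfZ : f ∉ G.Term Z := fun hfZ => z6 f hfZ fj
        refine ⟨⟨z1, z2, z3, z4, z5, fun x hx hN => ?_⟩, hfZ⟩
        exact z6 x hx ((hf x (hne x hx) (by rintro rfl; exact hfZ hx)).2 hN)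
      · rintro ⟨h, hfZ⟩
        have hne := ne _ _ h
        obtain ⟨z1, z2, z3, z4, z5, z6⟩ := h
        refine ⟨z1, z2, z3, z4, z5, fun x hx hN => ?_⟩
        exact z6 x hx ((hf x (hne x hx) (by rintro rfl; exact hfZ hx)).1 hN)
    · rw [SD_comm]
      by_cases fi : NN G Li f
      · refine concl_of_Gr (f := f) (fun Z => ?_) bj bi
        constructor
        · intro h
          have hne := ne _ _ h
          obtain ⟨z1, z2, z3, z4, z5, z6⟩ := h
          have hfZ : f ∉ G.Term Z := fun hfZ => z6 f hfZ fi
          refine ⟨⟨z1, z2, z3, z4, z5, fun x hx hN => ?_⟩, hfZ⟩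
          exact z6 x hx ((hf x (hne x hx) (by rintro rfl; exact hfZ hx)).1 hN)
        · rintro ⟨h, hfZ⟩
          have hne := ne _ _ h
          obtain ⟨z1, z2, z3, z4, z5, z6⟩ := h
          refine ⟨z1, z2, z3, z4, z5, fun x hx hN => ?_⟩
          exact z6 x hx ((hf x (hne x hx) (by rintro rfl; exact hfZ hx)).2 hN)
      · have hf' : ∀ x, x ≠ e → (NN G Lj x ↔ NN G Li x) := by
          intro x hx
          by_cases hxf : x = f
          · subst hxf; tauto
          · exact hf x hx hxf
        refine concl_of_Gr (f := e) (fun Z => ?_) bj bi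
        constructor
        · intro h
          have hne := ne _ _ h
          obtain ⟨z1, z2, z3, z4, z5, z6⟩ := h
          refine ⟨⟨z1, z2, z3, z4, z5, fun x hx hN => ?_⟩, fun h => hne e h rfl⟩
          exact z6 x hx ((hf' x (hne x hx)).1 hN)
        · rintro ⟨h, -⟩
          have hne := ne _ _ h
          obtain ⟨z1, z2, z3, z4, z5, z6⟩ := h
          refine ⟨z1, z2, z3, z4, z5, fun x hx hN => ?_⟩
          exact z6 x hx ((hf' x (hne x hx)).2 hN)

end Helpers

end NodalGraph

/-- Proposition 3.1: for `s ∈ {2,3}`, the symmetric difference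
`T^s_{i,k|j,k}` is totally ordered by inclusion, and any two consecutive members
form a terminal pair. -/
theorem symmDiff_totally_ordered_and_consecutive_terminal
    (G : NodalGraph) (hconn : G.Connected) (i j k : G.V)
    (hij : i ≠ j) (hmeet : ∃ e, G.onComp e i ∧ G.onComp e j)
    (s : ℕ) (hs : s = 2 ∨ s = 3)
    (M2i M2j M3i M3j : ℕ) (W2i W2j W3i W3j : ℕ → Finset G.V)
    (h2i : G.IsNested2 i k M2i W2i) (h2j : G.IsNested2 j k M2j W2j)
    (h3i : G.IsNested3 i k (G.chainSet M2i W2i) M3i W3i)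
    (h3j : G.IsNested3 j k (G.chainSet M2j W2j) M3j W3j)
    (D : Set (Finset G.V))
    (hD : D = symmDiff (if s = 2 then G.chainSet M2i W2i else G.chainSet M3i W3i)
                       (if s = 2 then G.chainSet M2j W2j else G.chainSet M3j W3j)) :
    (∀ Wt ∈ D, ∀ Wt' ∈ D, Wt ⊆ Wt' ∨ Wt' ⊆ Wt) ∧
    (∀ Wt ∈ D, ∀ Wt' ∈ D, Wt ⊂ Wt' →
      (¬ ∃ Wt'' ∈ D, Wt ⊂ Wt'' ∧ Wt'' ⊂ Wt') →
      (G.Term Wt ∩ G.Term Wt').Nonempty) := by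
  change NodalGraph.Concl G D
  obtain ⟨e, he1, he2⟩ := hmeet
  have he : G.ends e = (i, j) ∨ G.ends e = (j, i) := by
    unfold NodalGraph.onComp at he1 he2
    rcases he1 with h1 | h1 <;> rcases he2 with h2 | h2
    · exact absurd (h1.symm.trans h2) hij
    · exact Or.inl (Prod.ext h1 h2)
    · exact Or.inr (Prod.ext h2 h1)
    · exact absurd (h1.symm.trans h2) hij
  obtain ⟨Li, hLi, sLi⟩ := NodalGraph.exists_Gr (P := G.cond2 i k)
    (NodalGraph.cond2_inter hconn) NodalGraph.cond2_ne h2i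
  obtain ⟨Lj, hLj, sLj⟩ := NodalGraph.exists_Gr (P := G.cond2 j k)
    (NodalGraph.cond2_inter hconn) NodalGraph.cond2_ne h2j
  rw [sLi] at h3i hD
  rw [sLj] at h3j hD
  obtain ⟨Ki, hKi, sKi⟩ := NodalGraph.exists_Gr (P := G.cond3 i k {Z | Z ∈ Li})
    (NodalGraph.cond3_inter hconn hLi) NodalGraph.cond3_ne h3i
  obtain ⟨Kj, hKj, sKj⟩ := NodalGraph.exists_Gr (P := G.cond3 j k {Z | Z ∈ Lj})
    (NodalGraph.cond3_inter hconn hLj) NodalGraph.cond3_ne h3j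
  rw [sKi, sKj] at hD
  rcases hs with rfl | rfl
  · have hD' : D = {Z | NodalGraph.SD G Li Lj Z} := by
      rw [hD]
      ext Z
      simp [Set.mem_symmDiff, NodalGraph.SD]
    rw [hD']
    exact NodalGraph.two_case hconn he hLi hLj
  · have hD' : D = {Z | NodalGraph.SD G Ki Kj Z} := by
      rw [hD]
      ext Z
      simp [Set.mem_symmDiff, NodalGraph.SD]
    rw [hD']
    rcases NodalGraph.two_dichotomy hconn he hLi hLj with h | h
    · exact NodalGraph.three_case hconn he hLi hLj hKi hKj h
    · rw [NodalGraph.SD_comm]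
      exact NodalGraph.three_case hconn he.symm hLj hLi hKj hKi h
end
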